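/- arXiv:1203.1158 — 4 statements merged into one kernel-verified Lean document; each statement's English description precedes it below -/
import Mathlib

section
/- There exist a constant c > 0 and infinitely many positive integers n such that for each such n there is a connected graph G on n vertices with h(G) ≤ n/4 − c·log log n. -/
open Finset

/-- The multiset of pairwise distances between distinct vertices of `S` in `G`
(one entry for each unordered pair of distinct vertices of `S`). -/
noncomputable def distMultiset {V : Type*} (G : SimpleGraph V) (S : Finset V) : Multiset ℕ :=
  letI := Classical.decEq V
  (S.sym2.filter fun p => ¬ p.IsDiag).val.map
    (Sym2.lift ⟨fun a b => G.dist a b, fun _ _ => SimpleGraph.dist_comm⟩)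

/-- Two disjoint vertex sets are homometric if their distance multisets coincide. -/
def Homometric {V : Type*} (G : SimpleGraph V) (S₁ S₂ : Finset V) : Prop :=
  Disjoint S₁ S₂ ∧ distMultiset G S₁ = distMultiset G S₂

/-- `h(G)`: the largest `h` such that `G` contains two disjoint homometric sets of
size `h` each. -/
noncomputable def homNumber {V : Type*} (G : SimpleGraph V) : ℕ :=
  sSup {h : ℕ | ∃ S₁ S₂ : Finset V, Homometric G S₁ S₂ ∧ S₁.card = h ∧ S₂.card = h}

/-!
The graph consists of `k` disjoint cliques, all joined to the first vertex (the hub) of a path.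

Let `S` and `T` be homometric of equal size. If both meet a clique, neither contains a path vertex
beyond the second one: the farthest such vertex, in `S` say, has a distance to a clique vertex of
`S` that no pair in `T` attains. Hence the edges inside `S` are counted, up to one path edge, by
`∑ C(xᵢ, 2)`, where `xᵢ` is the number of vertices of `S` in the `i`-th clique or at the hub;
likewise for `T` and `yᵢ`. Unless about `k` clique vertices lie outside `S ∪ T`, `xᵢ + yᵢ` is nearly
the size of the `i`-th clique, so if the sizes grow fast enough, the difference at the last index
with `xᵢ ≠ yᵢ` outweighs all the others. Thus `xᵢ = yᵢ` for all `i`. The hub is in neither set: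
otherwise its owner would be short of one vertex in every clique; so `S` and `T` have equally many
vertices in each clique, and as the clique sizes are odd, each clique has a vertex outside `S ∪ T`
after all. If instead `S` lies in the path, its diameter is attained only once, so `T` has at most
one clique vertex, and `S` and `T` hardly exceed the path. Balancing the length of the path against
the cliques gives `h ≤ n / 4 - k / 4 + O(1)`, where `k` is of order `log log n`.
-/

section SumDominated

theorem eq_zero_of_abs_sum_le {ι R : Type*} [Fintype ι] [LinearOrder ι]
    [LocallyFiniteOrderBot ι] [AddCommGroup R] [LinearOrder R] [IsOrderedAddMonoid R]
    {f : ι → R} {b : R} (hgrow : ∀ i, f i ≠ 0 → ∑ j ∈ Iio i, |f j| + b < |f i|)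
    (hsum : |∑ i, f i| ≤ b) : f = 0 := by
  by_contra hf
  obtain ⟨i, hi, hmax⟩ := exists_max_image {i | f i ≠ 0} id
    (by simpa [Finset.Nonempty, funext_iff] using hf)
  replace hi : f i ≠ 0 := (mem_filter.1 hi).2
  have hzero : ∀ j, i < j → f j = 0 := fun j hij => by
    by_contra hj
    exact (hmax j (by simpa using hj)).not_gt hij
  have hsplit : f i = ∑ j, f j - ∑ j ∈ Iio i, f j := by
    rw [← sum_subset (subset_univ (Iic i)) fun j _ hj => hzero j (by simpa using hj), ← Iio_insert,
      sum_insert (by simp), add_sub_cancel_right]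
  refine (hgrow i hi).not_ge ?_
  calc |f i| = |∑ j, f j - ∑ j ∈ Iio i, f j| := by rw [← hsplit]
    _ ≤ |∑ j, f j| + |∑ j ∈ Iio i, f j| := abs_sub _ _
    _ ≤ b + ∑ j ∈ Iio i, |f j| := add_le_add hsum (abs_sum_le_sum_abs _ _)
    _ = ∑ j ∈ Iio i, |f j| + b := add_comm _ _

theorem add_one_choose_two_mul_two (a : ℕ) : (a + 1).choose 2 * 2 = (a + 1) * a := by
  rw [← Nat.add_one_mul_choose_eq, Nat.choose_one_right]

theorem two_mul_choose_two_sub_choose_two (a b : ℕ) :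
    2 * (a.choose 2 - b.choose 2 : ℤ) = (a - b) * (a + b - 1) := by
  have two_mul_choose_two (d : ℕ) : 2 * (d.choose 2 : ℤ) = d * (d - 1) := by
    rcases d with _ | d
    · simp
    · have := add_one_choose_two_mul_two d
      zify at this
      push_cast
      linarith
  rw [mul_sub, two_mul_choose_two, two_mul_choose_two]
  ring

theorem add_sub_one_le_two_mul_abs_choose_two_sub {a b : ℕ} (h : a ≠ b) :
    (a + b - 1 : ℤ) ≤ 2 * |(a.choose 2 - b.choose 2 : ℤ)| := by
  have hab : 1 ≤ |(a - b : ℤ)| := Int.one_le_abs (sub_ne_zero.2 (mod_cast h))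
  calc (a + b - 1 : ℤ) ≤ |(a + b - 1 : ℤ)| := le_abs_self _
    _ ≤ |(a - b : ℤ)| * |(a + b - 1 : ℤ)| := le_mul_of_one_le_left (abs_nonneg _) hab
    _ = 2 * |(a.choose 2 - b.choose 2 : ℤ)| := by
      rw [← abs_mul, ← two_mul_choose_two_sub_choose_two, abs_mul, abs_two]

theorem lt_add_of_sum_lt_sum_add {ι : Type*} [Fintype ι] {s m : ι → ℕ} {k : ℕ}
    (hle : ∀ i, s i ≤ m i) (hsum : ∑ i, m i < ∑ i, s i + k) (i : ι) : m i < s i + k := by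
  classical
  have hrest : ∑ j ∈ univ.erase i, s j ≤ ∑ j ∈ univ.erase i, m j := sum_le_sum fun j _ => hle j
  rw [← add_sum_erase univ m (mem_univ i), ← add_sum_erase univ s (mem_univ i)] at hsum
  omega

theorem eq_of_sum_choose_two_le {ι : Type*} [Fintype ι] [LinearOrder ι] [LocallyFiniteOrderBot ι]
    {m x y : ι → ℕ} {k : ℕ} (hgrow : ∀ i, 2 * ∑ j ∈ Iio i, (m j + 1).choose 2 + k + 2 < m i)
    (hle : ∀ i, x i + y i ≤ m i + 1) (hge : ∀ i, m i < x i + y i + k)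
    (hxy : ∑ i, (x i).choose 2 ≤ ∑ i, (y i).choose 2 + 1)
    (hyx : ∑ i, (y i).choose 2 ≤ ∑ i, (x i).choose 2 + 1) : x = y := by
  set f : ι → ℤ := fun i => (x i).choose 2 - (y i).choose 2 with hf
  have hsum : |∑ i, f i| ≤ 1 := by
    zify at hxy hyx
    rw [hf, sum_sub_distrib, abs_sub_le_iff]
    constructor <;> linarith
  have hupper (i : ι) : |f i| ≤ (m i + 1).choose 2 := by
    have := hle i
    refine abs_sub_le_of_nonneg_of_le ?_ ?_ ?_ ?_ <;> norm_cast
    any_goals exact Nat.zero_le _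
    all_goals exact Nat.choose_le_choose 2 (by omega)
  have hlower (i : ι) (hi : x i ≠ y i) : ∑ j ∈ Iio i, |f j| + 1 < |f i| := by
    have h1 := add_sub_one_le_two_mul_abs_choose_two_sub hi
    have h2 := sum_le_sum fun j (_ : j ∈ Iio i) => hupper j
    have h3 := hgrow i
    have h4 := hge i
    zify at h3 h4
    linarith
  have hzero : f = 0 :=
    eq_zero_of_abs_sum_le (fun i hi => hlower i fun h => hi (by simp [hf, h])) hsum
  ext i
  by_contra hi
  simpa [hzero] using hlower i hi

end SumDominated

section LayeringFunction

variable {V : Type*} {G : SimpleGraph V} {u : V} {f : V → ℕ}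

theorem exists_walk_length_eq_of_forall_exists_adj (hu : f u = 0)
    (hpred : ∀ v ≠ u, ∃ w, G.Adj w v ∧ f v = f w + 1) (v : V) :
    ∃ p : G.Walk u v, p.length = f v := by
  induction hn : f v using Nat.strong_induction_on generalizing v with
  | _ n ih =>
    by_cases hv : v = u
    · subst hv
      exact ⟨.nil, by simp [← hn, hu]⟩
    · obtain ⟨w, hwv, hw⟩ := hpred v hv
      obtain ⟨p, hp⟩ := ih (f w) (by omega) w rfl
      exact ⟨p.concat hwv, by rw [SimpleGraph.Walk.length_concat, hp, ← hn, hw]⟩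

theorem le_add_walk_length_of_forall_adj (hlip : ∀ v w, G.Adj v w → f w ≤ f v + 1) {v w : V}
    (p : G.Walk v w) : f w ≤ f v + p.length := by
  induction p with
  | nil => simp
  | cons h p ih =>
    have := hlip _ _ h
    rw [SimpleGraph.Walk.length_cons]
    omega

theorem reachable_and_dist_eq_of_layering (hu : f u = 0)
    (hlip : ∀ v w, G.Adj v w → f w ≤ f v + 1)
    (hpred : ∀ v ≠ u, ∃ w, G.Adj w v ∧ f v = f w + 1) (v : V) :
    G.Reachable u v ∧ G.dist u v = f v := by
  obtain ⟨p, hp⟩ := exists_walk_length_eq_of_forall_exists_adj hu hpred v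
  refine ⟨p.reachable, le_antisymm (hp ▸ SimpleGraph.dist_le p) ?_⟩
  obtain ⟨q, hq⟩ := p.reachable.exists_walk_length_eq_dist
  simpa [hu, hq] using le_add_walk_length_of_forall_adj hlip q

end LayeringFunction

section FinsetCard

variable {α β : Type*} {S T : Finset (α ⊕ β)}

theorem disjoint_toLeft (h : Disjoint S T) : Disjoint S.toLeft T.toLeft :=
  disjoint_left.2 fun _ hS hT => disjoint_left.1 h (mem_toLeft.1 hS) (mem_toLeft.1 hT)

theorem disjoint_toRight (h : Disjoint S T) : Disjoint S.toRight T.toRight :=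
  disjoint_left.2 fun _ hS hT => disjoint_left.1 h (mem_toRight.1 hS) (mem_toRight.1 hT)

theorem card_add_card_le_of_disjoint {A B C : Finset α} (h : Disjoint A B) (hA : A ⊆ C)
    (hB : B ⊆ C) : #A + #B ≤ #C := by
  classical
  exact card_union_of_disjoint h ▸ card_le_card (union_subset hA hB)

theorem mk_mem_image_offDiag [DecidableEq α] {A : Finset α} {a b : α} :
    s(a, b) ∈ A.offDiag.image Sym2.mk.uncurry ↔ a ∈ A ∧ b ∈ A ∧ a ≠ b := by
  simp only [mem_image, mem_offDiag, Prod.exists, Function.uncurry_apply_pair, Sym2.eq_iff]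
  grind

theorem card_filter_fst_eq {ι : Type*} {β : ι → Type*} [Fintype ι] [DecidableEq ι]
    [∀ i, Fintype (β i)] (i : ι) : #{x : Σ i, β i | x.1 = i} = Fintype.card (β i) := by
  rw [← Fintype.card_subtype, Fintype.card_congr (Equiv.sigmaSubtype i)]

theorem sum_fin_Iio {M : Type*} [AddCommMonoid M] {n : ℕ} (f : ℕ → M) (i : Fin n) :
    ∑ j ∈ Iio i, f j = ∑ j ∈ range i, f j := by
  rw [← Nat.Iio_eq_range, ← Fin.map_valEmbedding_Iio, sum_map]
  rfl

end FinsetCard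

section PairsAtDist

variable {V : Type*} {G : SimpleGraph V} {S T : Finset V} {t : ℕ}

open Classical in
/-- The unordered pairs of distinct vertices of `S` at distance `t` in `G`. Their number is the
multiplicity of `t` in `distMultiset G S`. -/
noncomputable def pairsAtDist (G : SimpleGraph V) (S : Finset V) (t : ℕ) : Finset (Sym2 V) :=
  {e ∈ S.sym2 | ¬ e.IsDiag ∧
    e.lift ⟨fun a b => G.dist a b, fun _ _ => SimpleGraph.dist_comm⟩ = t}

theorem mk_mem_pairsAtDist {u v : V} :
    s(u, v) ∈ pairsAtDist G S t ↔ u ∈ S ∧ v ∈ S ∧ u ≠ v ∧ G.dist u v = t := by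
  simp [pairsAtDist, and_assoc]

theorem card_pairsAtDist : #(pairsAtDist G S t) = (distMultiset G S).count t := by
  classical
  rw [distMultiset, Multiset.count_map, pairsAtDist, ← filter_filter]
  simp only [eq_comm (a := t)]
  congr!

theorem Homometric.symm (h : Homometric G S T) : Homometric G T S :=
  ⟨h.1.symm, h.2.symm⟩

theorem Homometric.card_pairsAtDist_eq (h : Homometric G S T) (t : ℕ) :
    #(pairsAtDist G S t) = #(pairsAtDist G T t) := by
  rw [card_pairsAtDist, card_pairsAtDist, h.2]

theorem Homometric.exists_dist_eq (h : Homometric G S T) {u v : V} (hu : u ∈ S) (hv : v ∈ S)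
    (huv : u ≠ v) : ∃ u' ∈ T, ∃ v' ∈ T, G.dist u' v' = G.dist u v := by
  have hS : 0 < #(pairsAtDist G S (G.dist u v)) :=
    card_pos.2 ⟨s(u, v), mk_mem_pairsAtDist.2 ⟨hu, hv, huv, rfl⟩⟩
  rw [h.card_pairsAtDist_eq, card_pos] at hS
  obtain ⟨⟨u', v'⟩, he⟩ := hS
  obtain ⟨hu', hv', -, hd⟩ := mk_mem_pairsAtDist.1 he
  exact ⟨u', hu', v', hv', hd⟩

end PairsAtDist

open SimpleGraph in
/-- The clique broom: the fibres of `c` span disjoint cliques, and all their vertices are joined to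
the end `0` (the hub) of a path on the `n + 1` vertices `0, 1, …, n`. -/
def cliqueBroom {α ι : Type*} (c : α → ι) (n : ℕ) : SimpleGraph (α ⊕ Fin (n + 1)) where
  Adj
    | .inl x, .inl y => x ≠ y ∧ c x = c y
    | .inl _, .inr j => j = 0
    | .inr i, .inl _ => i = 0
    | .inr i, .inr j => (pathGraph (n + 1)).Adj i j
  symm := ⟨by rintro (x | i) (y | j) h <;> simp_all [eq_comm, adj_comm]⟩
  loopless := ⟨by rintro (x | i) <;> simp⟩

namespace cliqueBroom

open SimpleGraph

section Distances

variable {α ι : Type*} {c : α → ι} {n : ℕ} {x y : α} {i j : Fin (n + 1)}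

@[simp]
theorem adj_inl_inl : (cliqueBroom c n).Adj (.inl x) (.inl y) ↔ x ≠ y ∧ c x = c y :=
  .rfl

@[simp]
theorem adj_inl_inr : (cliqueBroom c n).Adj (.inl x) (.inr j) ↔ j = 0 :=
  .rfl

@[simp]
theorem adj_inr_inl : (cliqueBroom c n).Adj (.inr i) (.inl x) ↔ i = 0 :=
  .rfl

@[simp]
theorem adj_inr_inr : (cliqueBroom c n).Adj (.inr i) (.inr j) ↔
    (i : ℕ) + 1 = j ∨ (j : ℕ) + 1 = i :=
  pathGraph_adj

open Classical in
theorem reachable_and_dist_inl (c : α → ι) (x : α) (v : α ⊕ Fin (n + 1)) :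
    (cliqueBroom c n).Reachable (.inl x) v ∧ (cliqueBroom c n).dist (.inl x) v =
      Sum.elim (fun y => if x = y then 0 else if c x = c y then 1 else 2)
        (fun j : Fin (n + 1) => (j : ℕ) + 1) v := by
  refine reachable_and_dist_eq_of_layering (f := Sum.elim _ _) (by simp) ?_ ?_ v
  · rintro (y | i) (z | j) h <;>
      simp only [adj_inl_inl, adj_inl_inr, adj_inr_inl, adj_inr_inr, Sum.elim_inl,
        Sum.elim_inr] at h ⊢ <;>
      grind
  · rintro (y | j) hv
    · by_cases hxy : c x = c y
      · exact ⟨.inl x, by grind [adj_inl_inl], by grind⟩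
      · exact ⟨.inr 0, by simp, by grind⟩
    · by_cases hj : j = 0
      · exact ⟨.inl x, by simpa, by simp [hj]⟩
      · have : (j : ℕ) ≠ 0 := Fin.val_ne_zero_iff.2 hj
        exact ⟨.inr ⟨j - 1, by omega⟩, by rw [adj_inr_inr]; grind, by grind⟩

theorem reachable_and_dist_inr (c : α → ι) (i : Fin (n + 1)) (v : α ⊕ Fin (n + 1)) :
    (cliqueBroom c n).Reachable (.inr i) v ∧ (cliqueBroom c n).dist (.inr i) v =
      Sum.elim (fun _ => (i : ℕ) + 1) (fun j : Fin (n + 1) => Nat.dist i j) v := by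
  refine reachable_and_dist_eq_of_layering (f := Sum.elim _ _) (by simp [Nat.dist]) ?_ ?_ v
  · rintro (y | i) (z | j) h <;>
      simp only [adj_inl_inl, adj_inl_inr, adj_inr_inl, adj_inr_inr, Sum.elim_inl,
        Sum.elim_inr, Nat.dist] at h ⊢ <;>
      grind
  · rintro (y | j) hv
    · exact ⟨.inr 0, by simp, by simp [Nat.dist]⟩
    · rcases lt_trichotomy i j with hij | rfl | hij
      · exact ⟨.inr ⟨j - 1, by omega⟩, by rw [adj_inr_inr]; grind, by grind [Nat.dist]⟩
      · exact absurd rfl hv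
      · exact ⟨.inr ⟨j + 1, by omega⟩, by simp, by grind [Nat.dist]⟩

theorem connected (c : α → ι) (n : ℕ) : (cliqueBroom c n).Connected where
  preconnected u v :=
    ((reachable_and_dist_inr c 0 u).1.symm).trans (reachable_and_dist_inr c 0 v).1

theorem dist_inl_inl_le_two : (cliqueBroom c n).dist (.inl x) (.inl y) ≤ 2 := by
  rw [(reachable_and_dist_inl c x _).2, Sum.elim_inl]
  split_ifs <;> simp

theorem dist_inr_inl : (cliqueBroom c n).dist (.inr j) (.inl x) = j + 1 :=
  (reachable_and_dist_inr c j _).2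

theorem dist_inl_inr : (cliqueBroom c n).dist (.inl x) (.inr j) = j + 1 := by
  rw [dist_comm, dist_inr_inl]

theorem dist_inr_inr : (cliqueBroom c n).dist (.inr i) (.inr j) = Nat.dist i j :=
  (reachable_and_dist_inr c i _).2

end Distances

section PathPart

variable {α ι : Type*} {c : α → ι} {n : ℕ} {S T : Finset (α ⊕ Fin (n + 1))}

theorem val_le_one_of_forall_le (h : Homometric (cliqueBroom c n) S T) (hS : S.toLeft.Nonempty)
    {j : Fin (n + 1)} (hj : j ∈ S.toRight) (hmax : ∀ i ∈ T.toRight, i ≤ j) : (j : ℕ) ≤ 1 := by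
  by_contra! hj1
  obtain ⟨x, hx⟩ := hS
  rw [mem_toLeft] at hx
  rw [mem_toRight] at hj
  obtain ⟨u, hu, v, hv, huv⟩ := h.exists_dist_eq hx hj Sum.inl_ne_inr
  have hjT : .inr j ∉ T := disjoint_left.1 h.1 hj
  rw [dist_inl_inr] at huv
  rcases u with y | a <;> rcases v with z | b
  · have := dist_inl_inl_le_two (c := c) (n := n) (x := y) (y := z)
    omega
  · rw [dist_inl_inr, Nat.add_right_cancel_iff, Fin.val_inj] at huv
    exact hjT (huv ▸ hv)
  · rw [dist_inr_inl, Nat.add_right_cancel_iff, Fin.val_inj] at huv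
    exact hjT (huv ▸ hu)
  · have ha : (a : ℕ) ≤ j := hmax a (mem_toRight.2 hu)
    have hb : (b : ℕ) ≤ j := hmax b (mem_toRight.2 hv)
    rw [dist_inr_inr, Nat.dist] at huv
    omega

theorem val_le_one_of_mem_toRight (h : Homometric (cliqueBroom c n) S T)
    (hS : S.toLeft.Nonempty) (hT : T.toLeft.Nonempty) : ∀ j ∈ S.toRight, (j : ℕ) ≤ 1 := by
  intro j hj
  obtain ⟨m, hm, hmax⟩ := (S.toRight ∪ T.toRight).exists_max_image id ⟨j, mem_union_left _ hj⟩
  have hm1 : (m : ℕ) ≤ 1 := by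
    rcases mem_union.1 hm with hmS | hmT
    · exact val_le_one_of_forall_le h hS hmS fun i hi => hmax i (mem_union_right _ hi)
    · exact val_le_one_of_forall_le h.symm hT hmT fun i hi => hmax i (mem_union_left _ hi)
  exact (Fin.val_le_of_le (hmax j (mem_union_left _ hj))).trans hm1

theorem exists_card_pairsAtDist_eq_one (hS : S.toLeft = ∅) (hcard : 4 ≤ #S) :
    ∃ D, 3 ≤ D ∧ #(pairsAtDist (cliqueBroom c n) S D) = 1 ∧
      ∀ u ∈ S, ∀ v ∈ S, (cliqueBroom c n).dist u v ≤ D := by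
  obtain ⟨P, rfl⟩ : ∃ P : Finset (Fin (n + 1)), S = P.map .inr :=
    ⟨S.toRight, by rw [← empty_disjSum, ← hS, toLeft_disjSum_toRight]⟩
  rw [card_map] at hcard
  have hP : P.Nonempty := card_pos.1 (by omega)
  have hbounds : ∀ a ∈ P, (P.min' hP : ℕ) ≤ a ∧ (a : ℕ) ≤ P.max' hP :=
    fun a ha => ⟨P.min'_le a ha, P.le_max' a ha⟩
  have hgap : (P.min' hP : ℕ) + 3 ≤ P.max' hP := by
    have := hcard.trans (card_le_card fun a ha => mem_Icc.2 (hbounds a ha))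
    rw [Fin.card_Icc] at this
    omega
  refine ⟨P.max' hP - P.min' hP, by omega, card_eq_one.2 ⟨s(.inr (P.min' hP), .inr (P.max' hP)),
    eq_singleton_iff_unique_mem.2 ⟨?_, ?_⟩⟩, ?_⟩
  · refine mk_mem_pairsAtDist.2 ⟨mem_map_of_mem _ (P.min'_mem hP), mem_map_of_mem _ (P.max'_mem hP),
      Sum.inr_injective.ne (Fin.ne_of_val_ne (by omega)), ?_⟩
    rw [dist_inr_inr, Nat.dist]
    omega
  · rintro ⟨u, v⟩ he
    obtain ⟨hu, hv, -, hd⟩ := mk_mem_pairsAtDist.1 he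
    obtain ⟨a, ha, rfl⟩ := mem_map.1 hu
    obtain ⟨b, hb, rfl⟩ := mem_map.1 hv
    have := hbounds a ha
    have := hbounds b hb
    rw [Function.Embedding.inr_apply, Function.Embedding.inr_apply, dist_inr_inr, Nat.dist] at hd
    simp only [Function.Embedding.inr_apply, Sym2.eq_iff, Sum.inr.injEq, Fin.ext_iff]
    omega
  · simp only [mem_map, forall_exists_index, and_imp]
    rintro _ a ha rfl _ b hb rfl
    have := hbounds a ha
    have := hbounds b hb
    rw [Function.Embedding.inr_apply, Function.Embedding.inr_apply, dist_inr_inr, Nat.dist]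
    omega

theorem one_lt_card_pairsAtDist {D : ℕ} (hT : 1 < #T.toLeft) (hD : 3 ≤ D)
    (hne : (pairsAtDist (cliqueBroom c n) T D).Nonempty)
    (hmax : ∀ u ∈ T, ∀ v ∈ T, (cliqueBroom c n).dist u v ≤ D) :
    1 < #(pairsAtDist (cliqueBroom c n) T D) := by
  obtain ⟨x, hx, y, hy, hxy⟩ := one_lt_card.1 hT
  rw [mem_toLeft] at hx hy
  obtain ⟨j, hj, hjD⟩ : ∃ j : Fin (n + 1), .inr j ∈ T ∧ (j : ℕ) + 1 = D := by
    obtain ⟨⟨u, v⟩, he⟩ := hne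
    obtain ⟨hu, hv, -, hd⟩ := mk_mem_pairsAtDist.1 he
    rcases u with a | a <;> rcases v with b | b
    · have := dist_inl_inl_le_two (c := c) (n := n) (x := a) (y := b)
      omega
    · exact ⟨b, hv, dist_inl_inr (c := c) ▸ hd⟩
    · exact ⟨a, hu, dist_inr_inl (c := c) ▸ hd⟩
    · have ha := hmax _ hx _ hu
      have hb := hmax _ hx _ hv
      rw [dist_inl_inr] at ha hb
      rw [dist_inr_inr, Nat.dist] at hd
      omega
  refine one_lt_card.2 ⟨s(.inl x, .inr j), ?_, s(.inl y, .inr j), ?_, by simpa using hxy⟩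
  · exact mk_mem_pairsAtDist.2 ⟨hx, hj, Sum.inl_ne_inr, dist_inl_inr.trans hjD⟩
  · exact mk_mem_pairsAtDist.2 ⟨hy, hj, Sum.inl_ne_inr, dist_inl_inr.trans hjD⟩

theorem card_toLeft_le_one (h : Homometric (cliqueBroom c n) S T) (hS : S.toLeft = ∅)
    (hcard : 4 ≤ #S) : #T.toLeft ≤ 1 := by
  obtain ⟨D, hD, hone, hmax⟩ := exists_card_pairsAtDist_eq_one (c := c) hS hcard
  rw [h.card_pairsAtDist_eq] at hone
  by_contra! hT
  refine (one_lt_card_pairsAtDist hT hD (card_pos.1 (by omega)) fun u hu v hv => ?_).ne' hone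
  by_cases huv : u = v
  · simp [huv]
  · obtain ⟨u', hu', v', hv', hd⟩ := h.symm.exists_dist_eq hu hv huv
    exact hd ▸ hmax u' hu' v' hv'

theorem card_add_card_le_of_toLeft_eq_empty (h : Homometric (cliqueBroom c n) S T)
    (hS : S.toLeft = ∅) (hcard : 4 ≤ #S) : #S + #T ≤ n + 2 := by
  have hleft := card_toLeft_le_one h hS hcard
  have hright := card_add_card_le_of_disjoint (disjoint_toRight h.1) (subset_univ _) (subset_univ _)
  rw [card_univ, Fintype.card_fin] at hright
  rw [← card_toLeft_add_card_toRight (u := S), ← card_toLeft_add_card_toRight (u := T), hS,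
    card_empty]
  omega

end PathPart

section Blocks

variable {α ι : Type*} [DecidableEq ι] {c : α → ι} {n : ℕ} {S : Finset (α ⊕ Fin (n + 1))}
  {i j : ι} {u v : α ⊕ Fin (n + 1)}

/-- The part of `S` in the union of the `i`-th clique and the hub. For the whole vertex set these
are the 2-connected blocks of the graph other than the edges of the path, so every edge outside the
path lies in exactly one of them. -/
def block (c : α → ι) (S : Finset (α ⊕ Fin (n + 1))) (i : ι) : Finset (α ⊕ Fin (n + 1)) :=
  {x ∈ S.toLeft | c x = i}.disjSum {j ∈ S.toRight | j = 0}

theorem card_block (c : α → ι) (S : Finset (α ⊕ Fin (n + 1))) (i : ι) :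
    #(block c S i) = #{x ∈ S.toLeft | c x = i} + #{j ∈ S.toRight | j = 0} :=
  card_disjSum _ _

@[simp]
theorem inl_mem_block {x : α} : .inl x ∈ block c S i ↔ .inl x ∈ S ∧ c x = i := by
  simp [block]

@[simp]
theorem inr_mem_block {k : Fin (n + 1)} : .inr k ∈ block c S i ↔ .inr k ∈ S ∧ k = 0 := by
  simp [block]

theorem adj_of_mem_block (hu : u ∈ block c S i) (hv : v ∈ block c S i) (huv : u ≠ v) :
    u ∈ S ∧ v ∈ S ∧ (cliqueBroom c n).Adj u v := by
  rcases u with x | a <;> rcases v with y | b <;>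
    grind [inl_mem_block, inr_mem_block, adj_inl_inl, adj_inl_inr, adj_inr_inl]

theorem eq_of_mem_block (huv : u ≠ v) (hui : u ∈ block c S i) (hvi : v ∈ block c S i)
    (huj : u ∈ block c S j) (hvj : v ∈ block c S j) : i = j := by
  rcases u with x | a <;> rcases v with y | b <;> grind [inl_mem_block, inr_mem_block]

theorem exists_mem_block_or_eq (hS : ∀ k ∈ S.toRight, (k : ℕ) ≤ 1) (hu : u ∈ S) (hv : v ∈ S)
    (huv : (cliqueBroom c n).Adj u v) :
    (∃ i, u ∈ block c S i ∧ v ∈ block c S i) ∨ s(u, v) = s(.inr 0, .inr 1) := by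
  rcases u with x | a <;> rcases v with y | b
  · exact .inl ⟨c y, by simp_all⟩
  · exact .inl ⟨c x, by simp_all⟩
  · exact .inl ⟨c y, by simp_all⟩
  · have ha := hS a (mem_toRight.2 hu)
    have hb := hS b (mem_toRight.2 hv)
    rw [adj_inr_inr] at huv
    have : 1 % (n + 1) = 1 := Nat.mod_eq_of_lt (by omega)
    right
    simp only [Sym2.eq_iff, Sum.inr.injEq, Fin.ext_iff, Fin.val_zero, Fin.val_one', this]
    omega

variable [Fintype ι]

theorem sum_choose_two_card_block_le (c : α → ι) (S : Finset (α ⊕ Fin (n + 1))) :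
    ∑ i, (#(block c S i)).choose 2 ≤ #(pairsAtDist (cliqueBroom c n) S 1) := by
  classical
  simp only [← Sym2.card_image_offDiag]
  rw [← card_biUnion]
  · refine card_le_card (biUnion_subset.2 ?_)
    rintro i - ⟨u, v⟩ he
    obtain ⟨hu, hv, huv⟩ := mk_mem_image_offDiag.1 he
    obtain ⟨huS, hvS, hadj⟩ := adj_of_mem_block hu hv huv
    exact mk_mem_pairsAtDist.2 ⟨huS, hvS, huv, dist_eq_one_iff_adj.2 hadj⟩
  · rintro i - j - hij
    refine disjoint_left.2 ?_
    rintro ⟨u, v⟩ hi hj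
    obtain ⟨hui, hvi, huv⟩ := mk_mem_image_offDiag.1 hi
    obtain ⟨huj, hvj, -⟩ := mk_mem_image_offDiag.1 hj
    exact hij (eq_of_mem_block huv hui hvi huj hvj)

theorem card_pairsAtDist_one_le (hS : ∀ k ∈ S.toRight, (k : ℕ) ≤ 1) :
    #(pairsAtDist (cliqueBroom c n) S 1) ≤ ∑ i, (#(block c S i)).choose 2 + 1 := by
  classical
  have hsub : pairsAtDist (cliqueBroom c n) S 1 ⊆ insert s(.inr 0, .inr 1)
      (univ.biUnion fun i => (block c S i).offDiag.image Sym2.mk.uncurry) := by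
    rintro ⟨u, v⟩ he
    obtain ⟨hu, hv, huv, hd⟩ := mk_mem_pairsAtDist.1 he
    rcases exists_mem_block_or_eq hS hu hv (dist_eq_one_iff_adj.1 hd) with ⟨i, hui, hvi⟩ | heq
    · exact mem_insert_of_mem
        (mem_biUnion.2 ⟨i, mem_univ i, mk_mem_image_offDiag.2 ⟨hui, hvi, huv⟩⟩)
    · exact heq ▸ mem_insert_self _ _
  calc #(pairsAtDist (cliqueBroom c n) S 1)
      ≤ #(univ.biUnion fun i => (block c S i).offDiag.image Sym2.mk.uncurry) + 1 :=
        (card_le_card hsub).trans (card_insert_le _ _)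
    _ ≤ ∑ i, (#(block c S i)).choose 2 + 1 := by
        simp only [← Sym2.card_image_offDiag]
        exact Nat.add_le_add_right card_biUnion_le 1

end Blocks

section SizeBound

variable {α ι : Type*} {c : α → ι} {n : ℕ} {S T : Finset (α ⊕ Fin (n + 1))}

theorem card_hub_add_card_hub_le_one (h : Disjoint S T) :
    #{j ∈ S.toRight | j = 0} + #{j ∈ T.toRight | j = 0} ≤ 1 :=
  card_add_card_le_of_disjoint (C := {0}) (disjoint_filter_filter (disjoint_toRight h))
    (fun _ hj => mem_singleton.2 (mem_filter.1 hj).2)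
    (fun _ hj => mem_singleton.2 (mem_filter.1 hj).2)

theorem card_toRight_add_card_toRight_le_two (h : Disjoint S T)
    (hS : ∀ j ∈ S.toRight, (j : ℕ) ≤ 1) (hT : ∀ j ∈ T.toRight, (j : ℕ) ≤ 1) :
    #S.toRight + #T.toRight ≤ 2 := by
  have hle := card_add_card_le_of_disjoint (C := {j : Fin (n + 1) | (j : ℕ) < 2})
    (disjoint_toRight h) (fun j hj => by simpa using Nat.lt_succ_of_le (hS j hj))
    (fun j hj => by simpa using Nat.lt_succ_of_le (hT j hj))
  rw [Fin.card_filter_val_lt] at hle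
  omega

theorem card_fiber_add_card_fiber_le [Fintype α] [DecidableEq ι] (c : α → ι) (h : Disjoint S T)
    (i : ι) : #{x ∈ S.toLeft | c x = i} + #{x ∈ T.toLeft | c x = i} ≤ #{x | c x = i} :=
  card_add_card_le_of_disjoint (disjoint_filter_filter (disjoint_toLeft h))
    (filter_subset_filter _ (subset_univ _)) (filter_subset_filter _ (subset_univ _))

theorem card_eq_sum_add_card_toRight [Fintype ι] [DecidableEq ι] (c : α → ι)
    (S : Finset (α ⊕ Fin (n + 1))) :
    #S = ∑ i, #{x ∈ S.toLeft | c x = i} + #S.toRight := by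
  rw [← card_toLeft_add_card_toRight, card_eq_sum_card_fiberwise (f := c) (t := univ) (by simp)]

theorem card_hub_le_card_hub [Fintype ι] [DecidableEq ι] (hTS : #T ≤ #S)
    (hright : #S.toRight < Fintype.card ι) (hblock : ∀ i, #(block c S i) ≤ #(block c T i)) :
    #{j ∈ S.toRight | j = 0} ≤ #{j ∈ T.toRight | j = 0} := by
  by_contra! hlt
  have hfiber : ∀ i, #{x ∈ S.toLeft | c x = i} + 1 ≤ #{x ∈ T.toLeft | c x = i} := fun i => by
    have := hblock i
    rw [card_block, card_block] at this
    omega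
  refine hTS.not_gt ?_
  calc #S = ∑ i, #{x ∈ S.toLeft | c x = i} + #S.toRight := card_eq_sum_add_card_toRight c S
    _ < ∑ i, #{x ∈ S.toLeft | c x = i} + Fintype.card ι := by omega
    _ = ∑ i, (#{x ∈ S.toLeft | c x = i} + 1) := by
      rw [sum_add_distrib, ← card_eq_sum_ones, card_univ]
    _ ≤ ∑ i, #{x ∈ T.toLeft | c x = i} := sum_le_sum fun i _ => hfiber i
    _ ≤ #T := by rw [card_eq_sum_add_card_toRight c T]; exact Nat.le_add_right _ _

theorem sum_card_fiber_add_card_le [Fintype α] [Fintype ι] [DecidableEq ι] (h : Disjoint S T)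
    (hodd : ∀ i, Odd #{x | c x = i})
    (hfiber : ∀ i, #{x ∈ S.toLeft | c x = i} = #{x ∈ T.toLeft | c x = i}) :
    ∑ i, (#{x ∈ S.toLeft | c x = i} + #{x ∈ T.toLeft | c x = i}) + Fintype.card ι ≤
      Fintype.card α := by
  have hwaste (i : ι) : #{x ∈ S.toLeft | c x = i} + #{x ∈ T.toLeft | c x = i} + 1 ≤
      #{x | c x = i} := by
    have hle := card_fiber_add_card_fiber_le c h i
    obtain ⟨r, hr⟩ := hodd i
    have := hfiber i
    omega
  calc _ = ∑ i, (#{x ∈ S.toLeft | c x = i} + #{x ∈ T.toLeft | c x = i} + 1) := by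
        rw [sum_add_distrib (g := fun _ => 1), ← card_eq_sum_ones, card_univ]
    _ ≤ ∑ i, #{x | c x = i} := sum_le_sum fun i _ => hwaste i
    _ = Fintype.card α := by rw [← card_eq_sum_card_fiberwise (by simp), card_univ]

variable [Fintype α] [Fintype ι] [LinearOrder ι] [LocallyFiniteOrderBot ι]

theorem card_block_eq_card_block (h : Homometric (cliqueBroom c n) S T)
    (hS : ∀ j ∈ S.toRight, (j : ℕ) ≤ 1) (hT : ∀ j ∈ T.toRight, (j : ℕ) ≤ 1)
    (hgrow : ∀ i, 2 * ∑ j ∈ Iio i, (#{x | c x = j} + 1).choose 2 + Fintype.card ι + 2 <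
      #{x | c x = i})
    (hlarge : Fintype.card α <
      ∑ i, (#{x ∈ S.toLeft | c x = i} + #{x ∈ T.toLeft | c x = i}) + Fintype.card ι)
    (i : ι) : #(block c S i) = #(block c T i) := by
  have hfiber := card_fiber_add_card_fiber_le c h.1
  have hhub := card_hub_add_card_hub_le_one h.1
  rw [← card_univ, card_eq_sum_card_fiberwise (f := c) (t := univ) (by simp)] at hlarge
  refine congrFun (eq_of_sum_choose_two_le hgrow (x := fun i => #(block c S i))
    (y := fun i => #(block c T i)) (fun i => ?_) (fun i => ?_) ?_ ?_) i
  · have := hfiber i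
    rw [card_block, card_block]
    omega
  · have := lt_add_of_sum_lt_sum_add hfiber hlarge i
    rw [card_block, card_block]
    omega
  · exact (sum_choose_two_card_block_le c S).trans
      ((h.card_pairsAtDist_eq 1).trans_le (card_pairsAtDist_one_le hT))
  · exact (sum_choose_two_card_block_le c T).trans
      ((h.symm.card_pairsAtDist_eq 1).trans_le (card_pairsAtDist_one_le hS))

theorem card_add_card_add_card_le (h : Homometric (cliqueBroom c n) S T) (hST : #S = #T)
    (hS : ∀ j ∈ S.toRight, (j : ℕ) ≤ 1) (hT : ∀ j ∈ T.toRight, (j : ℕ) ≤ 1)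
    (hι : 3 ≤ Fintype.card ι) (hodd : ∀ i, Odd #{x | c x = i})
    (hgrow : ∀ i, 2 * ∑ j ∈ Iio i, (#{x | c x = j} + 1).choose 2 + Fintype.card ι + 2 <
      #{x | c x = i}) :
    #S + #T + Fintype.card ι ≤ Fintype.card α + 2 := by
  have hright := card_toRight_add_card_toRight_le_two h.1 hS hT
  by_contra! hlt
  have hlarge : Fintype.card α <
      ∑ i, (#{x ∈ S.toLeft | c x = i} + #{x ∈ T.toLeft | c x = i}) + Fintype.card ι := by
    rw [card_eq_sum_add_card_toRight c S, card_eq_sum_add_card_toRight c T] at hlt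
    rw [sum_add_distrib]
    omega
  have hblock := card_block_eq_card_block h hS hT hgrow hlarge
  have hhub : #{j ∈ S.toRight | j = 0} = #{j ∈ T.toRight | j = 0} :=
    le_antisymm (card_hub_le_card_hub hST.ge (by omega) fun i => (hblock i).le)
      (card_hub_le_card_hub hST.le (by omega) fun i => (hblock i).ge)
  refine hlarge.not_ge (sum_card_fiber_add_card_le h.1 hodd fun i => ?_)
  simpa only [card_block, hhub, Nat.add_right_cancel_iff] using hblock i

theorem two_mul_homNumber_le (hι : 3 ≤ Fintype.card ι) (hodd : ∀ i, Odd #{x | c x = i})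
    (hgrow : ∀ i, 2 * ∑ j ∈ Iio i, (#{x | c x = j} + 1).choose 2 + Fintype.card ι + 2 <
      #{x | c x = i}) :
    2 * homNumber (cliqueBroom c n) ≤
      max 6 (max (n + 2) (Fintype.card α + 2 - Fintype.card ι)) := by
  rw [mul_comm, ← Nat.le_div_iff_mul_le two_pos]
  refine csSup_le ⟨0, ∅, ∅, ⟨disjoint_empty_left _, rfl⟩, rfl, rfl⟩ ?_
  rintro h ⟨S, T, hhom, hS, hT⟩
  rw [Nat.le_div_iff_mul_le two_pos]
  rcases lt_or_ge h 4 with hh | hh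
  · omega
  rcases S.toLeft.eq_empty_or_nonempty with hSl | hSl
  · have := card_add_card_le_of_toLeft_eq_empty hhom hSl (by omega)
    omega
  rcases T.toLeft.eq_empty_or_nonempty with hTl | hTl
  · have := card_add_card_le_of_toLeft_eq_empty hhom.symm hTl (by omega)
    omega
  · have := card_add_card_add_card_le hhom (hS.trans hT.symm)
      (val_le_one_of_mem_toRight hhom hSl hTl) (val_le_one_of_mem_toRight hhom.symm hTl hSl)
      hι hodd hgrow
    omega

end SizeBound

end cliqueBroom

section CliqueSizes

/-- The number of vertices of the `i`-th of the `k` cliques: an odd number that is larger than the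
number of edges in the preceding blocks together. It is doubly exponential because it has to exceed
the square of the preceding size. -/
def cliqueSize (k i : ℕ) : ℕ :=
  2 ^ 3 ^ (k + i) + 1

variable {k : ℕ}

theorem odd_cliqueSize (k i : ℕ) : Odd (cliqueSize k i) :=
  (even_two.pow_of_ne_zero (by positivity)).add_one

theorem two_le_cliqueSize (k i : ℕ) : 2 ≤ cliqueSize k i :=
  Nat.succ_le_succ Nat.one_le_two_pow

theorem two_mul_sum_choose_cliqueSize_lt (hk : k ≠ 0) (i : ℕ) :
    2 * ∑ j ∈ range i, (cliqueSize k j + 1).choose 2 + k + 2 < cliqueSize k i := by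
  induction i with
  | zero =>
    have hk1 : k + 1 ≤ 3 ^ k := Nat.lt_pow_self (by norm_num)
    have hk2 : 3 ^ k < 2 ^ 3 ^ k := Nat.lt_two_pow_self
    rw [cliqueSize, range_zero, sum_empty, add_zero]
    omega
  | succ i ih =>
    have hE : 2 ^ 3 ≤ 2 ^ 3 ^ (k + i) :=
      Nat.pow_le_pow_right two_pos (Nat.le_self_pow (by omega) 3)
    have hsucc : cliqueSize k (i + 1) = (2 ^ 3 ^ (k + i)) ^ 3 + 1 := by
      rw [cliqueSize, ← pow_mul, ← pow_succ, add_assoc]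
    have hchoose := add_one_choose_two_mul_two (cliqueSize k i)
    rw [sum_range_succ, hsucc]
    rw [cliqueSize] at ih hchoose ⊢
    generalize 2 ^ 3 ^ (k + i) = E at *
    nlinarith [Nat.mul_le_mul_right (E * E) hE, Nat.mul_le_mul_right E hE]

theorem two_mul_sum_cliqueSize_lt (hk : k ≠ 0) :
    2 * ∑ i ∈ range k, cliqueSize k i + k + 1 < 2 ^ 3 ^ (2 * k) := by
  have hle : ∑ i ∈ range k, cliqueSize k i ≤ ∑ i ∈ range k, (cliqueSize k i + 1).choose 2 :=
    sum_le_sum fun i _ => by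
      rw [Nat.choose_succ_succ', Nat.choose_one_right]
      exact Nat.le_add_right _ _
  have hlt := two_mul_sum_choose_cliqueSize_lt hk k
  rw [cliqueSize.eq_def k k, ← two_mul] at hlt
  omega

theorem exists_connected_four_mul_homNumber_add_le (hk : 4 ≤ k) :
    ∃ (V : Type) (_ : Fintype V) (G : SimpleGraph V), G.Connected ∧ k < Fintype.card V ∧
      Fintype.card V ≤ 2 ^ 3 ^ (2 * k) ∧ 4 * homNumber G + k ≤ Fintype.card V + 3 := by
  set s := ∑ i ∈ range k, cliqueSize k i with hs
  let c : (Σ i : Fin k, Fin (cliqueSize k i)) → Fin k := Sigma.fst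
  have hfiber (i : Fin k) : #{x | c x = i} = cliqueSize k i :=
    (card_filter_fst_eq i).trans (Fintype.card_fin _)
  have hcard : Fintype.card (Σ i : Fin k, Fin (cliqueSize k i)) = s := by
    simp only [Fintype.card_sigma, Fintype.card_fin, hs, sum_range]
  have hsk : 2 * k ≤ s := by
    simpa [mul_comm] using card_nsmul_le_sum (range k) _ 2 fun i _ => two_le_cliqueSize k i
  have hgrow (i : Fin k) : 2 * ∑ j ∈ Iio i, (#{x | c x = j} + 1).choose 2 +
      Fintype.card (Fin k) + 2 < #{x | c x = i} := by
    simp only [hfiber, Fintype.card_fin, sum_fin_Iio fun j => (cliqueSize k j + 1).choose 2]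
    exact two_mul_sum_choose_cliqueSize_lt (by omega) i
  have hhom := cliqueBroom.two_mul_homNumber_le (n := s - k) (by rw [Fintype.card_fin]; omega)
    (fun i => hfiber i ▸ odd_cliqueSize k i) hgrow
  have hsize := two_mul_sum_cliqueSize_lt (k := k) (by omega)
  refine ⟨_, inferInstance, _, cliqueBroom.connected c (s - k), ?_⟩
  rw [Fintype.card_sum, hcard, Fintype.card_fin]
  rw [hcard, Fintype.card_fin] at hhom
  omega

end CliqueSizes

theorem log_log_le_of_le {n a : ℕ} (h : n ≤ 2 ^ 3 ^ a) : Real.log (Real.log n) ≤ 2 * a := by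
  have hlog2 : Real.log 2 ≤ 1 := (Real.log_le_sub_one_of_pos two_pos).trans_eq (by norm_num)
  have hlog3 : Real.log 3 ≤ 2 := (Real.log_le_sub_one_of_pos three_pos).trans_eq (by norm_num)
  have hlog : Real.log n ≤ 3 ^ a := by
    rcases n.eq_zero_or_pos with rfl | hn
    · simp
    calc Real.log n ≤ Real.log ((2 : ℝ) ^ 3 ^ a) := Real.log_le_log (by positivity) (mod_cast h)
      _ = 3 ^ a * Real.log 2 := by rw [Real.log_pow]; push_cast; rfl
      _ ≤ 3 ^ a := mul_le_of_le_one_right (by positivity) hlog2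
  rcases (Real.log_natCast_nonneg n).eq_or_lt with h0 | hpos
  · rw [← h0, Real.log_zero]
    positivity
  calc Real.log (Real.log n) ≤ Real.log ((3 : ℝ) ^ a) := Real.log_le_log hpos hlog
    _ = a * Real.log 3 := Real.log_pow _ _
    _ ≤ a * 2 := by gcongr
    _ = 2 * a := mul_comm _ _

/-- There exist a constant `c > 0` and infinitely many positive integers `n` such that
for each such `n` there is a connected graph `G` on `n` vertices with
`h(G) ≤ n/4 − c·log log n`. -/
theorem stmt0 :
    ∃ c : ℝ, 0 < c ∧
      {n : ℕ | 0 < n ∧ ∃ (V : Type) (inst : Fintype V) (G : SimpleGraph V),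
        G.Connected ∧ @Fintype.card V inst = n ∧
        (homNumber G : ℝ) ≤ (n : ℝ) / 4 - c * Real.log (Real.log n)}.Infinite := by
  refine ⟨1 / 32, by norm_num, Set.infinite_of_forall_exists_gt fun N => ?_⟩
  obtain ⟨V, hV, G, hconn, hlt, hle, hhom⟩ :=
    exists_connected_four_mul_homNumber_add_le (k := N + 6) (by omega)
  refine ⟨Fintype.card V, ⟨by omega, V, hV, G, hconn, rfl, ?_⟩, by omega⟩
  have hlog := log_log_le_of_le hle
  have hhom' : (4 * homNumber G + (N + 6) : ℝ) ≤ Fintype.card V + 3 := mod_cast hhom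
  push_cast at hlog
  linarith
end

section
/- Let G be a connected graph on n vertices with diameter d ≥ 2, and let k ≥ 1 be an integer such that C(C(k,2) + d − 1, d − 1) < n − 2k + 2, where C(a,b) denotes the binomial coefficient. Then G contains two disjoint homometric sets of size k each; in particular h(G) ≥ k. -/
open Finset

/-!
A `k`-set has one of at most `C(C(k,2) + d - 1, d - 1)` distance multisets, so the theorem follows
by colouring the `k`-sets with their distance multisets and applying the Lovász–Kneser theorem:
colouring the `k`-subsets of an `n`-set with fewer than `n - 2k + 2` colours gives two disjoint
`k`-sets the same colour.

The Lovász–Kneser theorem is deduced, following Matoušek, from the octahedral Tucker lemma. For the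
latter, mod 2 cochains of the order complex of the nonzero sign vectors are written as polynomials
with one variable for each vertex, modulo squares of variables and products of incomparable
variables; the coboundary becomes multiplication by the sum `e` of all variables. Let `P` be the sum
of the products of variables whose labels increase in level and alternate in sign, starting with a
given sign. A sequence that becomes such a product on deleting a term does so in exactly two ways,
unless its own signs alternate, so `e * P = P + νP`, where `ν` is the antipodal map. Hence the total
value of `P` on the flags of length `|s|` below the sign vectors with support `s` does not depend on
`s`. It is `1` for `s = ∅`, and it vanishes if `|s|` exceeds the number of levels, because that
number bounds the degree of `P`.
-/

section AlternatingPolynomials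

variable {R S : Type*} [CommRing R] [CommRing S]

/-- The sum of the products `x t₁ ε₁ * ⋯ * x tᵣ εᵣ` over `t₁ < ⋯ < tᵣ < t` and alternating signs
with `ε₁ = σ`. The argument `ε` is the sign that would come next, which is `σ` for the empty
product and `-εᵣ` otherwise. -/
def altPoly (x : ℕ → ℤˣ → R) : ℕ → ℤˣ → ℤˣ → R
  | 0, σ, ε => if σ = ε then 1 else 0
  | t + 1, σ, ε => altPoly x t σ ε + x t (-ε) * altPoly x t σ (-ε)

lemma map_altPoly_eq_altPoly_neg (φ : R →+* S) {x : ℕ → ℤˣ → R} {y : ℕ → ℤˣ → S}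
    (h : ∀ t ε, φ (x t ε) = y t (-ε)) (t : ℕ) (σ ε : ℤˣ) :
    φ (altPoly x t σ ε) = altPoly y t (-σ) (-ε) := by
  induction t generalizing ε with
  | zero => simp [altPoly, apply_ite φ]
  | succ t ih => simp [altPoly, ih, h]

lemma map_altPoly_of_map_eq_zero (φ : R →+* S) {x : ℕ → ℤˣ → R} (h : ∀ t ε, φ (x t ε) = 0)
    (t : ℕ) (σ ε : ℤˣ) : φ (altPoly x t σ ε) = if σ = ε then 1 else 0 := by
  induction t with
  | zero => simp [altPoly, apply_ite φ]
  | succ t ih => rw [altPoly, map_add, map_mul, h, zero_mul, add_zero, ih]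

lemma sum_mul_altPoly_add_mem [CharP R 2] {x : ℕ → ℤˣ → R} {I : Ideal R}
    (hsq : ∀ t ε, x t ε ^ 2 ∈ I) (hopp : ∀ t ε, x t ε * x t (-ε) ∈ I) (t : ℕ) (σ ε : ℤˣ) :
    (∑ j ∈ range t, ∑ δ, x j δ) * altPoly x t σ ε +
      (altPoly x t σ (-ε) + altPoly x t (-σ) ε) ∈ I := by
  induction t generalizing ε with
  | zero =>
    have : (1 : R) + 1 = 0 := CharTwo.add_self_eq_zero 1
    rcases Int.units_eq_one_or σ with rfl | rfl <;> rcases Int.units_eq_one_or ε with rfl | rfl <;>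
      simp [altPoly, this]
  | succ t ih =>
    have hsum : ∑ δ, x t δ = x t ε + x t (-ε) := by
      rcases Int.units_eq_one_or ε with rfl | rfl <;> simp [add_comm]
    have hpos := ih ε
    have hneg := I.mul_mem_left (x t (-ε)) (ih (-ε))
    have hopp := I.mul_mem_right (altPoly x t σ (-ε)) (hopp t ε)
    have hsq := I.mul_mem_right (altPoly x t σ (-ε)) (hsq t (-ε))
    convert! I.add_mem (I.add_mem hpos hneg) (I.add_mem hopp hsq) using 1
    rw [sum_range_succ, hsum]
    simp only [altPoly, neg_neg]
    linear_combination x t ε * altPoly x t σ ε * CharTwo.two_eq_zero (R := R)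

lemma totalDegree_altPoly_le {α : Type*} {x : ℕ → ℤˣ → MvPolynomial α R}
    (hx : ∀ t ε, (x t ε).totalDegree ≤ 1) (t : ℕ) (σ ε : ℤˣ) :
    (altPoly x t σ ε).totalDegree ≤ t := by
  induction t generalizing ε with
  | zero =>
    rw [altPoly]
    split_ifs <;> simp
  | succ t ih =>
    have hmul : (x t (-ε) * altPoly x t σ (-ε)).totalDegree ≤ 1 + t :=
      (MvPolynomial.totalDegree_mul _ _).trans (Nat.add_le_add (hx t (-ε)) (ih (-ε)))
    refine (MvPolynomial.totalDegree_add _ _).trans (max_le ((ih ε).trans t.le_succ) ?_)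
    exact hmul.trans_eq (add_comm 1 t)

end AlternatingPolynomials

open MvPolynomial in
lemma pderiv_X_mul_X_mul {α R : Type*} [DecidableEq α] [CommSemiring R] (u v w : α)
    (f : MvPolynomial α R) :
    pderiv u (X v * X w * f) = X v * X w * pderiv u f +
      ((if v = u then X w * f else 0) + if w = u then X v * f else 0) := by
  simp only [Derivation.leibniz, pderiv_X, Pi.single_apply, smul_eq_mul]
  split_ifs <;> ring

/-- A sign vector: an element of `{-1, 0, 1}^ι`, whose nonzero values form the boundary of a
cross-polytope, the simplicial sphere underlying Tucker's lemma. -/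
abbrev SignVector (ι : Type*) := ι → SignType

namespace SignVector

variable {ι : Type*}

/-- The face order on sign vectors: `x` arises from `y` by replacing some coordinates by `0`. -/
def IsFace (x y : SignVector ι) : Prop := ∀ i, x i ≠ 0 → x i = y i

lemma IsFace.refl (x : SignVector ι) : IsFace x x := fun _ _ => rfl

lemma IsFace.neg {x y : SignVector ι} (h : IsFace x y) : IsFace (-x) (-y) :=
  fun i hi => congrArg Neg.neg (h i fun hx => hi (by simp [hx]))

lemma IsFace.ne_zero {x y : SignVector ι} (h : IsFace x y) (hx : x ≠ 0) : y ≠ 0 := by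
  rintro rfl
  exact hx (funext fun i => by_contra fun hi => hi (h i hi))

lemma IsFace.trans {x y z : SignVector ι} (hxy : IsFace x y) (hyz : IsFace y z) : IsFace x z :=
  fun i hi => (hxy i hi).trans (hyz i (hxy i hi ▸ hi))

lemma isFace_update_zero [DecidableEq ι] (x : SignVector ι) (i : ι) :
    IsFace (Function.update x i 0) x := by
  intro j hj
  rcases eq_or_ne j i with rfl | hji
  · simp at hj
  · exact Function.update_of_ne hji _ _

lemma ne_neg_self {x : SignVector ι} (hx : x ≠ 0) : x ≠ -x := by
  obtain ⟨i, hi⟩ := Function.ne_iff.1 hx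
  exact fun h => hi (SignType.self_eq_neg_iff.1 (congrFun h i))

lemma neg_ne_zero_iff {x : SignVector ι} : -x ≠ 0 ↔ x ≠ 0 := by
  simp [funext_iff, SignType.neg_eq_zero_iff]

lemma neg_update_zero [DecidableEq ι] (x : SignVector ι) (i : ι) :
    -Function.update x i 0 = Function.update (-x) i 0 := by
  ext j
  rcases eq_or_ne j i with rfl | hji <;> simp [*]

variable [Fintype ι]

/-- The support of a sign vector, as a finset. -/
def support (x : SignVector ι) : Finset ι := {i | x i ≠ 0}

lemma mem_support {x : SignVector ι} {i : ι} : i ∈ x.support ↔ x i ≠ 0 := by simp [support]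

lemma support_neg (x : SignVector ι) : (-x).support = x.support := by
  simp [support, SignType.neg_eq_zero_iff]

lemma support_nonempty {x : SignVector ι} : x.support.Nonempty ↔ x ≠ 0 := by
  simp only [Finset.Nonempty, mem_support, Function.ne_iff, Pi.zero_apply]

lemma ne_zero_of_mem_support {x : SignVector ι} {i : ι} (hi : i ∈ x.support) : x ≠ 0 :=
  fun h => mem_support.1 hi (congrFun h i)

lemma IsFace.support_subset {x y : SignVector ι} (h : IsFace x y) : x.support ⊆ y.support :=
  fun i hi => mem_support.2 (h i (mem_support.1 hi) ▸ mem_support.1 hi)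

lemma IsFace.eq_of_card_le {x y : SignVector ι} (h : IsFace x y) (hcard : #y.support ≤ #x.support) :
    x = y := by
  have hsupport := eq_of_subset_of_card_le h.support_subset hcard
  funext i
  by_cases hi : x i = 0
  · have hy : i ∉ y.support := hsupport ▸ fun hx => mem_support.1 hx hi
    rw [hi, not_not.1 fun hyi => hy (mem_support.2 hyi)]
  · exact h i hi

lemma card_support_eq_add (x : SignVector ι) :
    #x.support = #{i | x i = 1} + #{i | (-x) i = 1} := by
  classical
  rw [← card_union_of_disjoint]
  · congr 1
    ext i
    rcases (x i).trichotomy with h | h | h <;> simp [mem_support, h]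
  · exact disjoint_filter.2 fun i _ hi => by simp [hi]

lemma exists_card_eq_forall_eq_one_or {k : ℕ} (x : SignVector ι) (hk : 2 * k ≤ #x.support + 1) :
    (∃ S, #S = k ∧ ∀ i ∈ S, x i = 1) ∨ ∃ S, #S = k ∧ ∀ i ∈ S, (-x) i = 1 := by
  have hexists (y : SignVector ι) (hy : k ≤ #{i | y i = 1}) : ∃ S, #S = k ∧ ∀ i ∈ S, y i = 1 := by
    obtain ⟨S, hS, hcard⟩ := exists_subset_card_eq hy
    exact ⟨S, hcard, fun i hi => (mem_filter.1 (hS hi)).2⟩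
  have hadd := card_support_eq_add x
  have hlarge : k ≤ #{i | x i = 1} ∨ k ≤ #{i | (-x) i = 1} := by omega
  exact hlarge.imp (hexists x) (hexists (-x))

variable [DecidableEq ι]

open MvPolynomial

lemma support_update_zero (x : SignVector ι) (i : ι) :
    support (Function.update x i 0) = x.support.erase i := by
  ext j
  rcases eq_or_ne j i with rfl | hji <;> simp [mem_support, *]

/-- The value of a mod 2 cochain, given as a polynomial in the vertices, on the sum of all flags
`x = x₁ > ⋯ > x_k` in which each step sets one nonzero coordinate to `0`. A vertex is removed from
a monomial by `pderiv`. -/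
noncomputable def flagEval :
    ℕ → SignVector ι → MvPolynomial (SignVector ι) (ZMod 2) →ₗ[ZMod 2] ZMod 2
  | 0, _ => (aeval 0).toLinearMap
  | k + 1, x => ∑ i ∈ x.support, flagEval k (Function.update x i 0) ∘ₗ (pderiv x).toLinearMap

lemma flagEval_zero (x : SignVector ι) (f : MvPolynomial (SignVector ι) (ZMod 2)) :
    flagEval 0 x f = aeval 0 f := rfl

lemma flagEval_succ (k : ℕ) (x : SignVector ι) (f : MvPolynomial (SignVector ι) (ZMod 2)) :
    flagEval (k + 1) x f =
      ∑ i ∈ x.support, flagEval k (Function.update x i 0) (pderiv x f) := by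
  simp [flagEval]

lemma flagEval_rename_neg (k : ℕ) (x : SignVector ι) (f : MvPolynomial (SignVector ι) (ZMod 2)) :
    flagEval k (-x) (rename Neg.neg f) = flagEval k x f := by
  induction k generalizing x f with
  | zero => simp [flagEval_zero, aeval_rename, Function.comp_def, Pi.zero_def]
  | succ k ih =>
    simp only [flagEval_succ, pderiv_rename neg_injective, ← neg_update_zero, ih, support_neg]

lemma sum_sum_update_zero (x : SignVector ι) (g : SignVector ι → ZMod 2) :
    ∑ i ∈ x.support, ∑ j ∈ support (Function.update x i 0),
      g (Function.update (Function.update x i 0) j 0) = 0 := by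
  simp only [support_update_zero]
  rw [sum_sigma']
  refine sum_involution (fun p _ => ⟨p.2, p.1⟩) ?_ ?_ ?_ fun _ _ => rfl
  · rintro ⟨i, j⟩ hp
    simp only [mem_sigma, mem_erase] at hp
    rw [Function.update_comm hp.2.1]
    exact CharTwo.add_self_eq_zero _
  · rintro ⟨i, j⟩ hp - hij
    simp only [mem_sigma, mem_erase] at hp
    exact hp.2.1 (congrArg Sigma.fst hij)
  · rintro ⟨i, j⟩ hp
    simp only [mem_sigma, mem_erase] at hp ⊢
    exact ⟨hp.2.2, hp.2.1.symm, hp.1⟩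

/-- The sum of all vertices of the complex; multiplying by it is the coboundary operator on
cochains. -/
noncomputable def vertexSum : MvPolynomial (SignVector ι) (ZMod 2) := ∑ x with x ≠ 0, X x

lemma pderiv_vertexSum {x : SignVector ι} (hx : x ≠ 0) :
    pderiv x (vertexSum : MvPolynomial (SignVector ι) (ZMod 2)) = 1 := by
  simp [vertexSum, pderiv_X, Pi.single_apply, hx]

lemma flagEval_vertexSum_mul (k : ℕ) (x : SignVector ι)
    (f : MvPolynomial (SignVector ι) (ZMod 2)) :
    flagEval (k + 1) x (vertexSum * f) =
      ∑ i ∈ x.support, flagEval k (Function.update x i 0) f := by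
  induction k generalizing x f with
  | zero =>
    have hvertexSum : aeval (0 : SignVector ι → ZMod 2) (vertexSum (ι := ι)) = 0 := by
      simp [vertexSum]
    rw [flagEval_succ]
    refine sum_congr rfl fun i hi => ?_
    have hx := ne_zero_of_mem_support hi
    rw [Derivation.leibniz, pderiv_vertexSum hx, smul_eq_mul, smul_eq_mul, mul_one, map_add,
      flagEval_zero, map_mul, hvertexSum, zero_mul, zero_add]
  | succ k ih =>
    have hstep : ∀ i ∈ x.support,
        flagEval (k + 1) (Function.update x i 0) (pderiv x (vertexSum * f)) =
          (∑ j ∈ support (Function.update x i 0),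
            flagEval k (Function.update (Function.update x i 0) j 0) (pderiv x f)) +
          flagEval (k + 1) (Function.update x i 0) f := by
      intro i hi
      have hx := ne_zero_of_mem_support hi
      rw [Derivation.leibniz, pderiv_vertexSum hx, smul_eq_mul, smul_eq_mul, mul_one, map_add, ih]
    rw [flagEval_succ, sum_congr rfl hstep, sum_add_distrib,
      sum_sum_update_zero x fun y => flagEval k y (pderiv x f), zero_add]

lemma flagEval_X_mul_of_not_isFace {v x : SignVector ι} (hv : ¬ IsFace v x) (k : ℕ)
    (f : MvPolynomial (SignVector ι) (ZMod 2)) : flagEval k x (X v * f) = 0 := by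
  induction k generalizing x f with
  | zero => simp [flagEval_zero]
  | succ k ih =>
    have hvx : v ≠ x := fun h => hv (h ▸ IsFace.refl v)
    rw [flagEval_succ]
    refine sum_eq_zero fun i _ => ?_
    rw [Derivation.leibniz, pderiv_X_of_ne hvx, smul_zero, add_zero]
    exact ih (fun h => hv (h.trans (isFace_update_zero x i))) _

lemma flagEval_X_sq_mul (k : ℕ) (x v : SignVector ι) (f : MvPolynomial (SignVector ι) (ZMod 2)) :
    flagEval k x (X v ^ 2 * f) = 0 := by
  induction k generalizing x f with
  | zero => simp [flagEval_zero]
  | succ k ih =>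
    rw [flagEval_succ]
    refine sum_eq_zero fun i _ => ?_
    rw [sq, pderiv_X_mul_X_mul, CharTwo.add_self_eq_zero, add_zero, ← sq, ih]

lemma flagEval_X_mul_X_mul {v w : SignVector ι} (hvw : ¬ IsFace v w) (hwv : ¬ IsFace w v)
    (k : ℕ) (x : SignVector ι) (f : MvPolynomial (SignVector ι) (ZMod 2)) :
    flagEval k x (X v * X w * f) = 0 := by
  induction k generalizing x f with
  | zero => simp [flagEval_zero]
  | succ k ih =>
    have hzero {a b : SignVector ι} (hab : ¬ IsFace b a) (i : ι) :
        flagEval k (Function.update x i 0) (if a = x then X b * f else 0) = 0 := by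
      split_ifs with hx
      · subst hx
        exact flagEval_X_mul_of_not_isFace (fun h => hab (h.trans (isFace_update_zero a i))) k f
      · exact map_zero _
    rw [flagEval_succ]
    refine sum_eq_zero fun i _ => ?_
    rw [pderiv_X_mul_X_mul, map_add, map_add, ih, hzero hwv, hzero hvw, add_zero, add_zero]

lemma flagEval_monomial {k : ℕ} {s : SignVector ι →₀ ℕ} (hs : s.degree < k) (x : SignVector ι)
    (a : ZMod 2) : flagEval k x (monomial s a) = 0 := by
  induction k generalizing x s a with
  | zero => exact absurd hs (Nat.not_lt_zero _)
  | succ k ih =>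
    rw [flagEval_succ]
    refine sum_eq_zero fun i _ => ?_
    rw [pderiv_monomial]
    rcases eq_or_ne (s x) 0 with hx | hx
    · simp [hx]
    · have hle : Finsupp.single x 1 ≤ s := by simpa [Nat.one_le_iff_ne_zero] using hx
      have hdegree := congrArg Finsupp.degree (tsub_add_cancel_of_le hle)
      rw [map_add, Finsupp.degree_single] at hdegree
      exact ih (by omega) _ _

lemma flagEval_eq_zero_of_totalDegree_lt {k : ℕ} {f : MvPolynomial (SignVector ι) (ZMod 2)}
    (hf : f.totalDegree < k) (x : SignVector ι) : flagEval k x f = 0 := by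
  rw [f.as_sum, map_sum]
  exact sum_eq_zero fun s hs => flagEval_monomial ((le_totalDegree hs).trans_lt hf) x _

/-- The ideal of polynomials all of whose multiples vanish on flags. It contains the
relations of the order complex: squares of vertices and products of incomparable vertices. -/
noncomputable def flagIdeal (ι : Type*) [Fintype ι] [DecidableEq ι] :
    Ideal (MvPolynomial (SignVector ι) (ZMod 2)) where
  carrier := {f | ∀ k x g, flagEval k x (f * g) = 0}
  add_mem' hf hg k x h := by rw [add_mul, map_add, hf, hg, add_zero]
  zero_mem' k x g := by rw [zero_mul, map_zero]
  smul_mem' c f hf k x g := by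
    rw [smul_eq_mul, mul_comm c f, mul_assoc]
    exact hf k x (c * g)

lemma flagEval_eq_zero_of_mem_flagIdeal {f : MvPolynomial (SignVector ι) (ZMod 2)}
    (hf : f ∈ flagIdeal ι) (k : ℕ) (x : SignVector ι) : flagEval k x f = 0 := by
  simpa using hf k x 1

lemma X_sq_mem_flagIdeal (v : SignVector ι) : X v ^ 2 ∈ flagIdeal ι :=
  fun k x f => flagEval_X_sq_mul k x v f

lemma X_mul_X_mem_flagIdeal {v w : SignVector ι} (hvw : ¬ IsFace v w) (hwv : ¬ IsFace w v) :
    X v * X w ∈ flagIdeal ι :=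
  fun k x f => flagEval_X_mul_X_mul hvw hwv k x f

/-- The sign vectors with support `s`, i.e. the facets of the cross-polytope spanned by `s`. -/
def fullVectors (s : Finset ι) : Finset (SignVector ι) := {x | x.support = s}

lemma mem_fullVectors {s : Finset ι} {x : SignVector ι} :
    x ∈ fullVectors s ↔ ∀ i, x i ≠ 0 ↔ i ∈ s := by
  simp [fullVectors, Finset.ext_iff, mem_support]

lemma sum_fullVectors_eq_sum_add_neg {s : Finset ι} {i : ι} (hi : i ∈ s)
    (g : SignVector ι → ZMod 2) :
    ∑ x ∈ fullVectors s, g x = ∑ x ∈ fullVectors s with x i = 1, (g x + g (-x)) := by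
  rw [← sum_filter_add_sum_filter_not (fullVectors s) (fun x => x i = 1), sum_add_distrib]
  congr 1
  refine sum_nbij' (fun x => -x) (fun x => -x) ?_ ?_ (fun x _ => neg_neg x) (fun x _ => neg_neg x)
    fun x _ => by rw [neg_neg]
  · intro x hx
    simp only [mem_filter, mem_fullVectors, Pi.neg_apply, ne_eq, SignType.neg_eq_zero_iff] at hx ⊢
    refine ⟨hx.1, ?_⟩
    have hxi := (hx.1 i).2 hi
    rcases (x i).trichotomy with h | h | h <;> simp_all
  · intro x hx
    simp only [mem_filter, mem_fullVectors, Pi.neg_apply, ne_eq, SignType.neg_eq_zero_iff] at hx ⊢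
    exact ⟨hx.1, by rw [hx.2]; decide⟩

lemma sum_fullVectors_update_zero_of_ne {s : Finset ι} {i j : ι} (hj : j ∈ s) (hji : j ≠ i)
    (g : SignVector ι → ZMod 2) :
    ∑ x ∈ fullVectors s with x i = 1, g (Function.update x j 0) = 0 := by
  refine sum_involution (fun x _ => Function.update x j (-x j)) ?_ ?_ ?_ ?_
  · intro x _
    rw [Function.update_idem]
    exact CharTwo.add_self_eq_zero _
  · intro x hx _ h
    have hxj : -x j = x j := by simpa using congrFun h j
    exact (mem_fullVectors.1 (mem_filter.1 hx).1 j).2 hj (SignType.neg_eq_self_iff.1 hxj)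
  · intro x hx
    simp only [mem_filter, mem_fullVectors] at hx ⊢
    refine ⟨fun l => ?_, by rw [Function.update_of_ne hji.symm, hx.2]⟩
    rw [← hx.1 l]
    rcases eq_or_ne l j with rfl | hlj <;> simp [*]
  · intro x _
    simp

lemma sum_fullVectors_insert_update_zero {s : Finset ι} {i : ι} (hi : i ∉ s)
    (g : SignVector ι → ZMod 2) :
    ∑ x ∈ fullVectors (insert i s) with x i = 1, g (Function.update x i 0) =
      ∑ x ∈ fullVectors s, g x := by
  refine sum_nbij' (fun x => Function.update x i 0) (fun x => Function.update x i 1)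
    ?_ ?_ ?_ ?_ fun _ _ => rfl
  · intro x hx
    simp only [mem_filter, mem_fullVectors] at hx ⊢
    intro l
    rcases eq_or_ne l i with rfl | hli
    · simp [hi]
    · rw [Function.update_of_ne hli, hx.1 l, mem_insert, or_iff_right hli]
  · intro x hx
    simp only [mem_filter, mem_fullVectors] at hx ⊢
    refine ⟨fun l => ?_, Function.update_self ..⟩
    rcases eq_or_ne l i with rfl | hli
    · simp
    · rw [Function.update_of_ne hli, hx l, mem_insert, or_iff_right hli]
  · intro x hx
    simp [← (mem_filter.1 hx).2]
  · intro x hx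
    have hxi : x i = 0 := by_contra fun h => hi ((mem_fullVectors.1 hx i).1 h)
    simp [← hxi]

lemma sum_flagEval_insert {f : MvPolynomial (SignVector ι) (ZMod 2)}
    (hf : vertexSum * f + (f + rename Neg.neg f) ∈ flagIdeal ι) {s : Finset ι} {i : ι}
    (hi : i ∉ s) (k : ℕ) :
    ∑ x ∈ fullVectors (insert i s), flagEval (k + 1) x f = ∑ x ∈ fullVectors s, flagEval k x f := by
  have hboundary : ∀ x ∈ fullVectors (insert i s), flagEval (k + 1) x f + flagEval (k + 1) (-x) f =
      ∑ j ∈ insert i s, flagEval k (Function.update x j 0) f := by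
    intro x hx
    have hsupport : x.support = insert i s := (mem_filter.1 hx).2
    have hzero := flagEval_eq_zero_of_mem_flagIdeal hf (k + 1) x
    rw [map_add, map_add, flagEval_vertexSum_mul, hsupport] at hzero
    rw [← flagEval_rename_neg _ (-x), neg_neg]
    exact (CharTwo.add_eq_zero.1 hzero).symm
  calc ∑ x ∈ fullVectors (insert i s), flagEval (k + 1) x f
      = ∑ x ∈ fullVectors (insert i s) with x i = 1,
          ∑ j ∈ insert i s, flagEval k (Function.update x j 0) f := by
        rw [sum_fullVectors_eq_sum_add_neg (mem_insert_self i s)]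
        exact sum_congr rfl fun x hx => hboundary x (mem_filter.1 hx).1
    _ = ∑ x ∈ fullVectors (insert i s) with x i = 1, flagEval k (Function.update x i 0) f := by
        rw [sum_comm, sum_insert hi, add_eq_left]
        exact sum_eq_zero fun j hj => sum_fullVectors_update_zero_of_ne (mem_insert_of_mem hj)
          (ne_of_mem_of_not_mem hj hi) fun y => flagEval k y f
    _ = ∑ x ∈ fullVectors s, flagEval k x f :=
        sum_fullVectors_insert_update_zero hi fun y => flagEval k y f

lemma sum_flagEval_fullVectors {f : MvPolynomial (SignVector ι) (ZMod 2)}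
    (hf : vertexSum * f + (f + rename Neg.neg f) ∈ flagIdeal ι) (s : Finset ι) :
    ∑ x ∈ fullVectors s, flagEval #s x f = aeval 0 f := by
  induction s using Finset.induction_on with
  | empty =>
    have hempty : fullVectors (∅ : Finset ι) = {0} := by
      ext x
      simp [mem_fullVectors, funext_iff]
    simp [hempty, flagEval_zero]
  | insert i s hi ih => rw [card_insert_of_notMem hi, sum_flagEval_insert hf hi, ih]

end SignVector

/-- An antipodal labelling of the nonzero sign vectors by `±1, …, ±m` without complementary edges,
as in Tucker's lemma. The label of `x` is `sign x * (level x + 1)`; the values at `0` are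
irrelevant. -/
structure TuckerLabelling (ι : Type*) (m : ℕ) where
  level : SignVector ι → ℕ
  sign : SignVector ι → ℤˣ
  level_lt : ∀ x ≠ 0, level x < m
  level_neg : ∀ x ≠ 0, level (-x) = level x
  sign_neg : ∀ x ≠ 0, sign (-x) = -sign x
  sign_eq_of_isFace : ∀ x ≠ 0, ∀ y, x.IsFace y → level x = level y → sign x = sign y

namespace TuckerLabelling

variable {ι : Type*} {m : ℕ} [Fintype ι] [DecidableEq ι]

open MvPolynomial SignVector

/-- The sum of the vertices with level `t` and sign `ε`. -/
noncomputable def labelSum (L : TuckerLabelling ι m) (t : ℕ) (ε : ℤˣ) :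
    MvPolynomial (SignVector ι) (ZMod 2) :=
  ∑ x with x ≠ 0 ∧ L.level x = t ∧ L.sign x = ε, X x

lemma sum_labelSum (L : TuckerLabelling ι m) :
    ∑ t ∈ range m, ∑ ε, L.labelSum t ε = vertexSum := by
  rw [vertexSum, ← sum_product', ← sum_fiberwise_of_maps_to (t := range m ×ˢ univ)
    (g := fun x => (L.level x, L.sign x))]
  · simp only [labelSum, filter_filter, Prod.ext_iff]
  · intro x hx
    exact mem_product.2 ⟨mem_range.2 (L.level_lt x (mem_filter.1 hx).2), mem_univ _⟩

lemma rename_neg_labelSum (L : TuckerLabelling ι m) (t : ℕ) (ε : ℤˣ) :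
    rename Neg.neg (L.labelSum t ε) = L.labelSum t (-ε) := by
  rw [labelSum, labelSum, map_sum]
  refine sum_nbij' (fun x => -x) (fun x => -x) ?_ ?_ (fun x _ => neg_neg x) (fun x _ => neg_neg x)
    fun x _ => rename_X _ _
  all_goals
    intro x hx
    simp only [mem_filter, mem_univ, true_and] at hx ⊢
    rw [L.level_neg x hx.1, L.sign_neg x hx.1, neg_ne_zero_iff]
    simp [hx]

lemma totalDegree_labelSum_le (L : TuckerLabelling ι m) (t : ℕ) (ε : ℤˣ) :
    (L.labelSum t ε).totalDegree ≤ 1 :=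
  totalDegree_finsetSum_le fun x _ => (totalDegree_X x).le

lemma labelSum_sq_mem_flagIdeal (L : TuckerLabelling ι m) (t : ℕ) (ε : ℤˣ) :
    L.labelSum t ε ^ 2 ∈ flagIdeal ι := by
  rw [labelSum, CharTwo.sum_sq]
  exact Ideal.sum_mem _ fun x _ => X_sq_mem_flagIdeal x

lemma labelSum_mul_labelSum_neg_mem_flagIdeal (L : TuckerLabelling ι m) (t : ℕ) (ε : ℤˣ) :
    L.labelSum t ε * L.labelSum t (-ε) ∈ flagIdeal ι := by
  rw [labelSum, labelSum, sum_mul_sum]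
  refine Ideal.sum_mem _ fun x hx => Ideal.sum_mem _ fun y hy => ?_
  simp only [mem_filter, mem_univ, true_and] at hx hy
  obtain ⟨hx0, hxt, hxε⟩ := hx
  obtain ⟨hy0, hyt, hyε⟩ := hy
  have hsign : L.sign x ≠ L.sign y := by
    rw [hxε, hyε]
    exact units_ne_neg_self ε
  exact X_mul_X_mem_flagIdeal
    (fun h => hsign (L.sign_eq_of_isFace x hx0 y h (hxt.trans hyt.symm)))
    (fun h => hsign (L.sign_eq_of_isFace y hy0 x h (hyt.trans hxt.symm)).symm)

/-- The sum of all products of vertices whose labels increase in level and alternate in sign,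
starting with the sign `σ`. -/
noncomputable def alternatingSum (L : TuckerLabelling ι m) (σ : ℤˣ) :
    MvPolynomial (SignVector ι) (ZMod 2) :=
  ∑ ε, altPoly L.labelSum m σ ε

lemma rename_neg_alternatingSum (L : TuckerLabelling ι m) (σ : ℤˣ) :
    rename Neg.neg (L.alternatingSum σ) = L.alternatingSum (-σ) := by
  rw [alternatingSum, alternatingSum, map_sum]
  refine Fintype.sum_equiv (Equiv.neg ℤˣ) _ _ fun ε => ?_
  exact map_altPoly_eq_altPoly_neg (x := L.labelSum)
    (rename Neg.neg : _ →ₐ[ZMod 2] MvPolynomial (SignVector ι) (ZMod 2)).toRingHom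
    L.rename_neg_labelSum m σ ε

lemma vertexSum_mul_alternatingSum_add_mem_flagIdeal (L : TuckerLabelling ι m) (σ : ℤˣ) :
    vertexSum * L.alternatingSum σ + (L.alternatingSum σ + rename Neg.neg (L.alternatingSum σ)) ∈
      flagIdeal ι := by
  have hmem := Ideal.sum_mem (flagIdeal ι) (t := univ) fun ε _ => sum_mul_altPoly_add_mem
    L.labelSum_sq_mem_flagIdeal L.labelSum_mul_labelSum_neg_mem_flagIdeal m σ ε
  have hneg : ∑ ε, altPoly L.labelSum m σ (-ε) = L.alternatingSum σ :=
    Equiv.sum_comp (Equiv.neg ℤˣ) _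
  rw [sum_add_distrib, sum_add_distrib, ← mul_sum, hneg, sum_labelSum] at hmem
  rwa [rename_neg_alternatingSum]

lemma aeval_zero_alternatingSum (L : TuckerLabelling ι m) (σ : ℤˣ) :
    aeval (0 : SignVector ι → ZMod 2) (L.alternatingSum σ) = 1 := by
  have hlabelSum (t : ℕ) (ε : ℤˣ) : aeval (0 : SignVector ι → ZMod 2) (L.labelSum t ε) = 0 := by
    simp [labelSum]
  have haltPoly (ε : ℤˣ) :
      aeval (0 : SignVector ι → ZMod 2) (altPoly L.labelSum m σ ε) = if σ = ε then 1 else 0 :=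
    map_altPoly_of_map_eq_zero (x := L.labelSum)
      (aeval (0 : SignVector ι → ZMod 2) : _ →ₐ[ZMod 2] ZMod 2).toRingHom hlabelSum m σ ε
  simp only [alternatingSum, map_sum, haltPoly, sum_ite_eq, mem_univ, if_true]

end TuckerLabelling

open MvPolynomial SignVector in
theorem TuckerLabelling.card_le {ι : Type*} {m : ℕ} [Fintype ι] (L : TuckerLabelling ι m) :
    Fintype.card ι ≤ m := by
  classical
  by_contra! hlt
  rw [← card_univ] at hlt
  have hdegree : (L.alternatingSum 1).totalDegree ≤ m := totalDegree_finsetSum_le fun ε _ =>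
    totalDegree_altPoly_le L.totalDegree_labelSum_le m 1 ε
  have hone := sum_flagEval_fullVectors (L.vertexSum_mul_alternatingSum_add_mem_flagIdeal 1) univ
  rw [L.aeval_zero_alternatingSum, sum_eq_zero fun x _ =>
    flagEval_eq_zero_of_totalDegree_lt (hdegree.trans_lt hlt) x] at hone
  exact zero_ne_one hone

theorem SignVector.card_le_of_antipodal_cover {ι : Type*} [Fintype ι] {m : ℕ}
    (p : ℕ → SignVector ι → Prop) (hcover : ∀ x ≠ 0, ∃ t < m, p t x ∨ p t (-x))
    (hp : ∀ t x y, IsFace x y → p t x → ¬ p t (-y)) : Fintype.card ι ≤ m := by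
  classical
  let level (x : SignVector ι) : ℕ := sInf {t | p t x ∨ p t (-x)}
  have level_lt (x : SignVector ι) (hx : x ≠ 0) : level x < m :=
    let ⟨_, htm, ht⟩ := hcover x hx
    (Nat.sInf_le ht).trans_lt htm
  have level_neg (x : SignVector ι) : level (-x) = level x := by
    simp only [level, neg_neg, or_comm]
  have level_spec (x : SignVector ι) (hx : x ≠ 0) : p (level x) x ∨ p (level x) (-x) :=
    let ⟨t, _, ht⟩ := hcover x hx
    Nat.sInf_mem (s := {t | p t x ∨ p t (-x)}) ⟨t, ht⟩
  have hp_neg (t : ℕ) (x y : SignVector ι) (hxy : IsFace x y) (hx : p t (-x)) : ¬ p t y := by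
    simpa using hp t (-x) (-y) hxy.neg hx
  exact TuckerLabelling.card_le
    { level := level
      sign := fun x => if p (level x) x then 1 else -1
      level_lt := level_lt
      level_neg := fun x _ => level_neg x
      sign_neg := fun x hx => by
        rw [level_neg]
        rcases level_spec x hx with h | h
        · rw [if_pos h, if_neg (hp _ x x (.refl x) h)]
        · rw [if_pos h, if_neg (hp_neg _ x x (.refl x) h), neg_neg]
      sign_eq_of_isFace := fun x hx y hxy hlevel => by
        have hy := level_spec y (hxy.ne_zero hx)
        rw [← hlevel] at hy ⊢
        rcases level_spec x hx with h | h
        · rw [if_pos h, if_pos (hy.resolve_right (hp _ x y hxy h))]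
        · rw [if_neg (hp_neg _ x x (.refl x) h), if_neg (hp_neg _ x y hxy h)] }

theorem SignVector.card_le_card_of_antipodal_cover {ι τ : Type*} [Fintype ι] [Fintype τ]
    (p : τ → SignVector ι → Prop) (hcover : ∀ x ≠ 0, ∃ t, p t x ∨ p t (-x))
    (hp : ∀ t x y, IsFace x y → p t x → ¬ p t (-y)) : Fintype.card ι ≤ Fintype.card τ := by
  let e := Fintype.equivFin τ
  refine card_le_of_antipodal_cover (fun j x => ∃ t, (e t : ℕ) = j ∧ p t x) ?_ ?_
  · intro x hx
    obtain ⟨t, ht⟩ := hcover x hx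
    exact ⟨e t, (e t).isLt, ht.imp (fun h => ⟨t, rfl, h⟩) fun h => ⟨t, rfl, h⟩⟩
  · rintro j x y hxy ⟨t, ht, hx⟩ ⟨u, hu, hy⟩
    obtain rfl : t = u := e.injective (Fin.ext (ht.trans hu.symm))
    exact hp t x y hxy hx hy

theorem exists_disjoint_map_eq_of_card_lt_of_maps_to {V α : Type*} [Fintype V] {k : ℕ}
    {c : Finset V → α} {A : Finset α} (hc : ∀ S, #S = k → c S ∈ A)
    (hA : #A + 2 * k < Fintype.card V + 2) :
    ∃ S T, Disjoint S T ∧ #S = k ∧ #T = k ∧ c S = c T := by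
  by_contra! hne
  have hk : k ≠ 0 := by
    rintro rfl
    exact hne ∅ ∅ (disjoint_empty_left _) card_empty card_empty rfl
  classical
  let e := Fintype.equivFin (SignVector V)
  -- For small supports, `e` merely selects one vector from each antipodal pair.
  let p : Fin (2 * k - 2) ⊕ A → SignVector V → Prop := Sum.elim
    (fun t x => #x.support = t + 1 ∧ e x < e (-x))
    (fun a x => ∃ S, #S = k ∧ (∀ v ∈ S, x v = 1) ∧ c S = a)
  have hcover (x : SignVector V) (hx : x ≠ 0) : ∃ t, p t x ∨ p t (-x) := by
    by_cases hsmall : #x.support ≤ 2 * k - 2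
    · have hpos : 0 < #x.support := card_pos.2 (SignVector.support_nonempty.2 hx)
      refine ⟨.inl ⟨#x.support - 1, by omega⟩, ?_⟩
      have hcard : #x.support = #x.support - 1 + 1 := by omega
      have hne := e.injective.ne (SignVector.ne_neg_self hx)
      refine hne.lt_or_gt.imp (fun h => ⟨hcard, h⟩) fun h => ⟨?_, ?_⟩
      · rwa [SignVector.support_neg]
      · rwa [neg_neg]
    · rcases x.exists_card_eq_forall_eq_one_or (k := k) (by omega) with
        ⟨S, hS, hxS⟩ | ⟨S, hS, hxS⟩
      · exact ⟨.inr ⟨c S, hc S hS⟩, .inl ⟨S, hS, hxS, rfl⟩⟩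
      · exact ⟨.inr ⟨c S, hc S hS⟩, .inr ⟨S, hS, hxS, rfl⟩⟩
  have hantipodal : ∀ t x y, SignVector.IsFace x y → p t x → ¬ p t (-y) := by
    rintro (t | a) x y hxy
    · rintro ⟨hx, hlt⟩ ⟨hy, hgt⟩
      rw [SignVector.support_neg] at hy
      obtain rfl := hxy.eq_of_card_le (hy.trans hx.symm).le
      rw [neg_neg] at hgt
      exact hlt.not_gt hgt
    · rintro ⟨S, hS, hxS, hSa⟩ ⟨T, hT, hyT, hTa⟩
      refine hne S T (disjoint_left.2 fun v hvS hvT => ?_) hS hT (hSa.trans hTa.symm)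
      have hyv : y v = 1 := (hxy v (by simp [hxS v hvS])).symm.trans (hxS v hvS)
      simpa [hyv] using hyT v hvT
  have hcard := SignVector.card_le_card_of_antipodal_cover p hcover hantipodal
  simp only [Fintype.card_sum, Fintype.card_fin, Fintype.card_coe] at hcard
  omega

lemma card_finset_sym {α : Type*} [DecidableEq α] (s : Finset α) (r : ℕ) :
    #(s.sym r) = (#s).multichoose r := by
  have himage : s.sym r = univ.image (Sym.map ((↑) : s → α)) := by
    ext m
    simp only [mem_sym_iff, mem_image, mem_univ, true_and]
    constructor
    · intro hm
      refine ⟨m.attach.map fun a : {a // a ∈ m} => ⟨a, hm a a.2⟩, ?_⟩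
      rw [Sym.map_map]
      exact m.attach_map_coe
    · rintro ⟨m, rfl⟩ a ha
      obtain ⟨b, _, rfl⟩ := Sym.mem_map.1 ha
      exact b.2
  rw [himage, card_image_of_injective _ (Sym.map_injective Subtype.val_injective r), card_univ,
    Sym.card_sym_eq_multichoose, Fintype.card_coe]

section Graph

variable {V : Type*} (G : SimpleGraph V)

lemma card_distMultiset (S : Finset V) : (distMultiset G S).card = (#S).choose 2 := by
  classical
  rw [distMultiset, Multiset.card_map, ← Sym2.card_image_offDiag, ← Sym2.filter_image_mk_not_isDiag,
    ← sym2_eq_image]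
  congr!

variable {G}

lemma mem_Icc_of_mem_distMultiset [Finite V] (hG : G.Connected) {S : Finset V} {l : ℕ}
    (hl : l ∈ distMultiset G S) : l ∈ Icc 1 G.diam := by
  classical
  obtain ⟨q, hq, rfl⟩ := Multiset.mem_map.1 hl
  induction q with | _ a b =>
  have hab : a ≠ b := by simpa using (mem_filter.1 hq).2
  have := hG.nonempty
  exact mem_Icc.2 ⟨hG.pos_dist_of_ne hab,
    SimpleGraph.dist_le_diam (SimpleGraph.connected_iff_ediam_ne_top.1 hG)⟩

lemma le_homNumber [Finite V] {S T : Finset V} (h : Homometric G S T) (hcard : #S = #T) :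
    #S ≤ homNumber G := by
  have := Fintype.ofFinite V
  refine le_csSup ⟨Fintype.card V, ?_⟩ ⟨S, T, h, rfl, hcard.symm⟩
  rintro _ ⟨S, _, _, rfl, _⟩
  exact S.card_le_univ

theorem exists_homometric_of_multichoose_lt [Fintype V] (hG : G.Connected) {k : ℕ}
    (hk : G.diam.multichoose (k.choose 2) + 2 * k < Fintype.card V + 2) :
    ∃ S T, Homometric G S T ∧ #S = k ∧ #T = k := by
  let A : Finset (Multiset ℕ) := ((Icc 1 G.diam).sym (k.choose 2)).image (↑)
  have hmem (S : Finset V) (hS : #S = k) : distMultiset G S ∈ A :=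
    mem_image.2 ⟨⟨distMultiset G S, by rw [card_distMultiset, hS]⟩,
      mem_sym_iff.2 fun _ hl => mem_Icc_of_mem_distMultiset hG hl, rfl⟩
  have hA : #A ≤ G.diam.multichoose (k.choose 2) :=
    card_image_le.trans_eq (by rw [card_finset_sym, Nat.card_Icc, Nat.add_sub_cancel])
  obtain ⟨S, T, hdisjoint, hS, hT, heq⟩ :=
    exists_disjoint_map_eq_of_card_lt_of_maps_to hmem (by omega)
  exact ⟨S, T, ⟨hdisjoint, heq⟩, hS, hT⟩

end Graph

/-- If `G` is connected on `n` vertices with diameter `d ≥ 2` and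
`C(C(k,2)+d−1, d−1) < n − 2k + 2` for some `k ≥ 1`, then `G` contains two disjoint
homometric sets of size `k` each; in particular `h(G) ≥ k`. -/
theorem stmt1 {V : Type*} [Fintype V] (G : SimpleGraph V) (hG : G.Connected)
    (n d k : ℕ) (hn : Fintype.card V = n) (hd : G.diam = d) (hd2 : 2 ≤ d) (hk : 1 ≤ k)
    (hineq : (((k.choose 2 + d - 1).choose (d - 1) : ℤ)) < (n : ℤ) - 2 * k + 2) :
    (∃ S₁ S₂ : Finset V, Homometric G S₁ S₂ ∧ S₁.card = k ∧ S₂.card = k) ∧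
      k ≤ homNumber G := by
  subst hn hd
  have hchoose : G.diam.multichoose (k.choose 2) =
      (k.choose 2 + G.diam - 1).choose (G.diam - 1) := by
    rw [Nat.multichoose_eq, add_comm (k.choose 2)]
    exact Nat.choose_symm_of_eq_add (by omega)
  obtain ⟨S, T, hST, hS, hT⟩ := exists_homometric_of_multichoose_lt hG (k := k) (by omega)
  exact ⟨⟨S, T, hST, hS, hT⟩, hS ▸ le_homNumber hST (hS.trans hT.symm)⟩
end

section
/- For every connected graph G, h(G) ≥ ⌊(diam(G) + 1)/2⌋, where diam(G) is the diameter of G (the two halves of a shortest path realizing the diameter are homometric). -/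
open Finset

/-!
Along a walk realizing the distance between its ends, vertices at positions `i` and `j` are at
distance `|i - j|`. This depends only on the difference of positions, so shifting by `m` the first
`m` vertices of such a walk with at least `2 * m` vertices preserves their pairwise distances.
-/

lemma filter_not_isDiag_sym2_map {ι V : Type*} [DecidableEq ι] [DecidableEq V] (f : ι ↪ V)
    (T : Finset ι) :
    ((T.map f).sym2.filter fun p => ¬ p.IsDiag) =
      (T.sym2.filter fun p => ¬ p.IsDiag).map f.sym2Map := by
  rw [sym2_map, filter_map]
  congr 1
  exact filter_congr fun p _ => not_congr (Sym2.isDiag_map f.injective)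

lemma distMultiset_map_eq_of_dist_eq {ι V W : Type*} {G : SimpleGraph V} {H : SimpleGraph W}
    {f : ι ↪ V} {g : ι ↪ W} {T : Finset ι}
    (hfg : ∀ i ∈ T, ∀ j ∈ T, G.dist (f i) (f j) = H.dist (g i) (g j)) :
    distMultiset G (T.map f) = distMultiset H (T.map g) := by
  classical
  simp only [distMultiset, filter_not_isDiag_sym2_map, map_val, Multiset.map_map]
  refine Multiset.map_congr rfl fun p hp => ?_
  induction p with
  | _ i j =>
    obtain ⟨hi, hj⟩ := mk_mem_sym2_iff.1 (mem_filter.1 hp).1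
    exact hfg i hi j hj

lemma Homometric.card_le_homNumber {V : Type*} [Finite V] {G : SimpleGraph V} {S₁ S₂ : Finset V}
    (h : Homometric G S₁ S₂) (hcard : S₁.card = S₂.card) : S₁.card ≤ homNumber G := by
  have := Fintype.ofFinite V
  refine le_csSup ⟨Fintype.card V, ?_⟩ ⟨S₁, S₂, h, rfl, hcard.symm⟩
  rintro _ ⟨T, -, -, rfl, -⟩
  exact card_le_univ T

section Path

variable {V : Type*} {G : SimpleGraph V} {u v : V} {p : G.Walk u v}

lemma dist_getVert_add_of_length_eq_dist (hp : p.length = G.dist u v) {i k : ℕ}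
    (hik : i + k ≤ p.length) : G.dist (p.getVert i) (p.getVert (i + k)) = k := by
  have hsub : ((p.drop i).take k).IsSubwalk p :=
    ((p.drop i).isSubwalk_take k).trans (p.isSubwalk_drop i)
  have hdist := SimpleGraph.length_eq_dist_of_subwalk hp hsub
  rw [SimpleGraph.Walk.take_length, SimpleGraph.Walk.drop_length,
    SimpleGraph.Walk.drop_getVert] at hdist
  omega

lemma dist_getVert_of_length_eq_dist (hp : p.length = G.dist u v) {i j : ℕ}
    (hi : i ≤ p.length) (hj : j ≤ p.length) :
    G.dist (p.getVert i) (p.getVert j) = Nat.dist i j := by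
  wlog hij : i ≤ j generalizing i j
  · rw [SimpleGraph.dist_comm, Nat.dist_comm, this hj hi (le_of_not_ge hij)]
  · obtain ⟨k, rfl⟩ := Nat.exists_eq_add_of_le hij
    rw [dist_getVert_add_of_length_eq_dist hp hj, Nat.dist_eq_sub_of_le hij,
      Nat.add_sub_cancel_left]

/-- The segment of the path `p` formed by its `m` consecutive vertices from position `a` on,
encoded as an embedding of `Fin m` so that segments of equal size share their index type. -/
def pathSegment (hp : p.IsPath) (a m : ℕ) (ham : a + m ≤ p.length + 1) : Fin m ↪ V where
  toFun i := p.getVert (a + i)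
  inj' i j hij := by
    have hadd : a + (i : ℕ) = a + j :=
      hp.getVert_injOn (Set.mem_ofPred.2 (by omega)) (Set.mem_ofPred.2 (by omega)) hij
    exact Fin.ext (Nat.add_left_cancel hadd)

lemma disjoint_map_pathSegment (hp : p.IsPath) {a b m n : ℕ} (hab : a + m ≤ b)
    (ham : a + m ≤ p.length + 1) (hbn : b + n ≤ p.length + 1) :
    Disjoint (univ.map (pathSegment hp a m ham)) (univ.map (pathSegment hp b n hbn)) := by
  simp only [disjoint_left, mem_map, mem_univ, true_and]
  rintro _ ⟨i, rfl⟩ ⟨j, hij⟩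
  have hadd : b + (j : ℕ) = a + i :=
    hp.getVert_injOn (Set.mem_ofPred.2 (by omega)) (Set.mem_ofPred.2 (by omega)) hij
  omega

lemma distMultiset_map_pathSegment (hp : p.IsPath) (hdist : p.length = G.dist u v) {a b m : ℕ}
    (ham : a + m ≤ p.length + 1) (hbm : b + m ≤ p.length + 1) :
    distMultiset G (univ.map (pathSegment hp a m ham)) =
      distMultiset G (univ.map (pathSegment hp b m hbm)) := by
  refine distMultiset_map_eq_of_dist_eq fun i _ j _ => ?_
  calc G.dist (p.getVert (a + i)) (p.getVert (a + j))
      = Nat.dist (a + i) (a + j) :=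
        dist_getVert_of_length_eq_dist hdist (by omega) (by omega)
    _ = Nat.dist (b + i) (b + j) := by rw [Nat.dist_add_add_left, Nat.dist_add_add_left]
    _ = G.dist (p.getVert (b + i)) (p.getVert (b + j)) :=
        (dist_getVert_of_length_eq_dist hdist (by omega) (by omega)).symm

end Path

theorem stmt2_general {V : Type*} {G : SimpleGraph V} {u v : V} (huv : G.Reachable u v) :
    ∃ S₁ S₂ : Finset V, Homometric G S₁ S₂ ∧
      S₁.card = (G.dist u v + 1) / 2 ∧ S₂.card = (G.dist u v + 1) / 2 := by
  obtain ⟨p, hp, hdist⟩ := huv.exists_path_of_dist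
  have hlen : 2 * ((G.dist u v + 1) / 2) ≤ p.length + 1 := by omega
  set m := (G.dist u v + 1) / 2
  have h₁ : 0 + m ≤ p.length + 1 := by omega
  have h₂ : m + m ≤ p.length + 1 := by omega
  refine ⟨univ.map (pathSegment hp 0 m h₁), univ.map (pathSegment hp m m h₂),
    ⟨disjoint_map_pathSegment hp (zero_add m).le h₁ h₂,
      distMultiset_map_pathSegment hp hdist h₁ h₂⟩, ?_, ?_⟩ <;>
    rw [card_map, card_univ, Fintype.card_fin]

lemma dist_add_one_div_two_le_homNumber {V : Type*} [Finite V] {G : SimpleGraph V} {u v : V}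
    (huv : G.Reachable u v) : (G.dist u v + 1) / 2 ≤ homNumber G := by
  obtain ⟨S₁, S₂, hS, h₁, h₂⟩ := stmt2_general huv
  exact h₁ ▸ hS.card_le_homNumber (h₁.trans h₂.symm)

/-- For every connected graph `G`, `h(G) ≥ ⌊(diam(G)+1)/2⌋`. -/
theorem stmt2 {V : Type*} [Fintype V] (G : SimpleGraph V) (hG : G.Connected) :
    (G.diam + 1) / 2 ≤ homNumber G := by
  have := hG.nonempty
  obtain ⟨u, v, huv⟩ := G.exists_dist_eq_diam
  exact huv ▸ dist_add_one_div_two_le_homNumber (hG u v)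
end

section
/- For every tree T on n ≥ 1 vertices, h(T) ≥ n^(1/3) − 1. -/
open Finset

/-!
A tree satisfies the four-point condition, so the distances inside a sphere form an ultrametric,
and they are even. In an ultrametric set, disjoint pairs at the minimal distance `t` have homometric
halves: replacing each point by its partner moves no other distance, all of which are at least `t`.
Hence deleting at most `2 h(T)` points from a sphere destroys its smallest distance, and a sphere of
radius `e`, with at most `e` nonzero distances, has at most `2 h(T) e + 1` vertices. The two halves
of a longest path are homometric too, so the spheres of radius `0, …, h(T)` about its midpoint cover
`T`, and they have at most `(h(T) + 1) ^ 3` vertices in total.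
-/

section

variable {V : Type*} {G : SimpleGraph V}

section Homometric

lemma distMultiset_map_eq_of_dist_eq_s5 {ι : Type*} (s : Finset ι) (a b : ι ↪ V)
    (h : ∀ i ∈ s, ∀ j ∈ s, G.dist (a i) (a j) = G.dist (b i) (b j)) :
    distMultiset G (s.map a) = distMultiset G (s.map b) := by
  classical
  have isDiag_map (f : ι ↪ V) (p : Sym2 ι) : (f.sym2Map p).IsDiag ↔ p.IsDiag :=
    Sym2.isDiag_map f.injective
  simp only [distMultiset, sym2_map, filter_map, map_val, Multiset.map_map]
  simp only [Function.comp_def, isDiag_map]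
  refine Multiset.map_congr rfl fun p hp ↦ ?_
  induction p with | _ i j
  have hij : i ∈ s ∧ j ∈ s := mk_mem_sym2_iff.1 (mem_filter.1 hp).1
  exact h i hij.1 j hij.2

lemma card_le_homNumber [Finite V] {ι : Type*} [Fintype ι] (a b : ι ↪ V) (hab : ∀ i j, a i ≠ b j)
    (h : ∀ i j, G.dist (a i) (a j) = G.dist (b i) (b j)) : Fintype.card ι ≤ homNumber G := by
  have := Fintype.ofFinite V
  have hbdd : BddAbove {h : ℕ | ∃ S₁ S₂ : Finset V,
      Homometric G S₁ S₂ ∧ S₁.card = h ∧ S₂.card = h} := by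
    refine ⟨Fintype.card V, ?_⟩
    rintro _ ⟨S₁, -, -, rfl, -⟩
    exact card_le_univ S₁
  refine le_csSup hbdd ⟨univ.map a, univ.map b, ⟨?_, ?_⟩, card_map a, card_map b⟩
  · simpa [disjoint_left] using fun i j ↦ (hab i j).symm
  · exact distMultiset_map_eq_of_dist_eq_s5 univ a b fun i _ j _ ↦ h i j

end Homometric

section Geodesic

open SimpleGraph

variable {u v w : V}

lemma dist_getVert_add {p : G.Walk u v} (hp : p.length = G.dist u v) {i d : ℕ}
    (hid : i + d ≤ p.length) : G.dist (p.getVert i) (p.getVert (i + d)) = d := by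
  have hsub : ((p.drop i).take d).IsSubwalk p :=
    ((p.drop i).isSubwalk_take d).trans (p.isSubwalk_drop i)
  have hlen := length_eq_dist_of_subwalk hp hsub
  rw [Walk.take_length, Walk.drop_length, Walk.drop_getVert] at hlen
  omega

lemma dist_getVert_getVert {p : G.Walk u v} (hp : p.length = G.dist u v) {i j : ℕ}
    (hi : i ≤ p.length) (hj : j ≤ p.length) :
    G.dist (p.getVert i) (p.getVert j) = max i j - min i j := by
  wlog hij : i ≤ j generalizing i j
  · rw [dist_comm, this hj hi (by omega), max_comm, min_comm]
  · obtain ⟨d, rfl⟩ := Nat.exists_eq_add_of_le hij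
    rw [dist_getVert_add hp hj]
    omega

lemma dist_add_dist_eq_of_mem_support {p : G.Walk u v} (hp : p.length = G.dist u v)
    (hw : w ∈ p.support) : G.dist u w + G.dist w v = G.dist u v := by
  classical
  rw [← length_eq_dist_of_subwalk hp (p.isSubwalk_takeUntil hw),
    ← length_eq_dist_of_subwalk hp (p.isSubwalk_dropUntil hw), ← Walk.length_append,
    p.take_spec, hp]

lemma isPath_append_of_forall_mem_support {p : G.Walk u v} {q : G.Walk v w} (hp : p.IsPath)
    (hq : q.IsPath) (hpq : ∀ x ∈ p.support, x ∈ q.support → x = v) : (p.append q).IsPath := by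
  have hv : v ∉ q.support.tail := by
    have := hq.support_nodup
    rw [← Walk.cons_tail_support, List.nodup_cons] at this
    exact this.1
  rw [Walk.isPath_def, Walk.support_append]
  refine hp.support_nodup.append hq.support_nodup.tail fun x hxp hxq ↦ ?_
  exact hv (hpq x hxp (List.mem_of_mem_tail hxq) ▸ hxq)

lemma diam_add_one_div_two_le_homNumber [Finite V] (hG : G.Connected) :
    (G.diam + 1) / 2 ≤ homNumber G := by
  have := hG.nonempty
  obtain ⟨x, y, hxy⟩ := G.exists_dist_eq_diam
  obtain ⟨p, hpath, hp⟩ := hG.exists_path_of_dist x y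
  have hinj {i j : ℕ} (hi : i ≤ p.length) (hj : j ≤ p.length)
      (hij : p.getVert i = p.getVert j) : i = j := hpath.getVert_injOn hi hj hij
  let a : Fin ((G.diam + 1) / 2) ↪ V :=
    ⟨fun i ↦ p.getVert i, fun i j hij ↦ Fin.ext (hinj (by omega) (by omega) hij)⟩
  let b : Fin ((G.diam + 1) / 2) ↪ V :=
    ⟨fun i ↦ p.getVert (p.length - i), fun i j hij ↦ by
      have := hinj (by omega) (by omega) hij
      omega⟩
  have hab (i j) : a i ≠ b j := fun hij ↦ by
    have := hinj (by omega) (by omega) hij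
    omega
  have hdist (i j) : G.dist (a i) (a j) = G.dist (b i) (b j) := by
    have ha : G.dist (a i) (a j) = _ := dist_getVert_getVert hp (by omega) (by omega)
    have hb : G.dist (b i) (b j) = _ := dist_getVert_getVert hp (by omega) (by omega)
    omega
  simpa only [Fintype.card_fin] using card_le_homNumber a b hab hdist

lemma even_dist_add_dist_add_dist (hG : G.Connected) (hbip : G.IsBipartite) (u v w : V) :
    Even (G.dist u v + G.dist v w + G.dist w u) := by
  obtain ⟨p, hp⟩ := hG.exists_walk_length_eq_dist u v
  obtain ⟨q, hq⟩ := hG.exists_walk_length_eq_dist v w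
  obtain ⟨s, hs⟩ := hG.exists_walk_length_eq_dist w u
  rw [← hp, ← hq, ← hs, ← Walk.length_append, ← Walk.length_append]
  exact two_colorable_iff_forall_loop_even.1 hbip u _

end Geodesic

section Tree

open SimpleGraph

lemma eq_of_isPath (hG : G.IsAcyclic) {u v : V} {p q : G.Walk u v} (hp : p.IsPath)
    (hq : q.IsPath) : p = q :=
  congrArg Subtype.val ((hG.subsingleton_path u v).elim ⟨p, hp⟩ ⟨q, hq⟩)

lemma length_eq_dist_of_isPath (hG : G.IsAcyclic) {u v : V} {p : G.Walk u v} (hp : p.IsPath) :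
    p.length = G.dist u v := by
  obtain ⟨q, hq, hlen⟩ := p.reachable.exists_path_of_dist
  rw [eq_of_isPath hG hp hq, hlen]

lemma support_subset_support_of_isPath (hG : G.IsAcyclic) {u v : V} {p q : G.Walk u v}
    (hp : p.IsPath) : p.support ⊆ q.support := by
  classical
  rw [eq_of_isPath hG hp q.bypass_isPath]
  exact q.support_bypass_subset_support

lemma dist_add_dist_eq_of_forall_dist_le (hT : G.IsTree) {r u m : V} {p : G.Walk m u}
    (hp : p.IsPath) (hm : ∀ x ∈ p.support, G.dist r m ≤ G.dist r x) :
    G.dist r m + G.dist m u = G.dist r u := by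
  obtain ⟨q, hq, hlen⟩ := hT.connected.exists_path_of_dist r m
  have hqp : ∀ x ∈ q.support, x ∈ p.support → x = m := by
    intro x hxq hxp
    have hx := dist_add_dist_eq_of_mem_support hlen hxq
    have hmx := hm x hxp
    exact hT.connected.dist_eq_zero_iff.1 (by omega)
  rw [← length_eq_dist_of_isPath hT.isAcyclic (isPath_append_of_forall_mem_support hq hp hqp),
    Walk.length_append, hlen, length_eq_dist_of_isPath hT.isAcyclic hp]

lemma exists_median (hT : G.IsTree) (r u v : V) :
    ∃ m, (∀ p : G.Walk u v, m ∈ p.support) ∧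
      G.dist r m + G.dist m u = G.dist r u ∧ G.dist r m + G.dist m v = G.dist r v := by
  classical
  obtain ⟨p, hp, -⟩ := hT.connected.exists_path_of_dist u v
  obtain ⟨m, hm, hmin⟩ := p.support.toFinset.exists_min_image (G.dist r) ⟨u, by simp⟩
  rw [List.mem_toFinset] at hm
  have hmin' : ∀ x ∈ p.support, G.dist r m ≤ G.dist r x := fun x hx ↦ hmin x (by simpa using hx)
  refine ⟨m, fun q ↦ support_subset_support_of_isPath hT.isAcyclic hp hm, ?_, ?_⟩
  · refine dist_add_dist_eq_of_forall_dist_le hT (hp.takeUntil hm).reverse fun x hx ↦ ?_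
    rw [Walk.support_reverse, List.mem_reverse] at hx
    exact hmin' x (p.support_takeUntil_subset_support hm hx)
  · exact dist_add_dist_eq_of_forall_dist_le hT (hp.dropUntil hm)
      fun x hx ↦ hmin' x (p.support_dropUntil_subset_support hm hx)

lemma four_point_condition (hT : G.IsTree) (u v w r : V) :
    G.dist u v + G.dist w r ≤ max (G.dist u w + G.dist v r) (G.dist u r + G.dist v w) := by
  obtain ⟨m, hm, hru, hrv⟩ := exists_median hT r u v
  obtain ⟨p, hp⟩ := hT.connected.exists_walk_length_eq_dist u w
  obtain ⟨q, hq⟩ := hT.connected.exists_walk_length_eq_dist w v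
  have huv : G.dist u v ≤ G.dist u m + G.dist m v := hT.connected.dist_triangle
  have hwr : G.dist w r ≤ G.dist w m + G.dist m r := hT.connected.dist_triangle
  rcases (Walk.mem_support_append_iff p q).1 (hm (p.append q)) with hmp | hmq
  · have huw := dist_add_dist_eq_of_mem_support hp hmp
    grind [SimpleGraph.dist_comm]
  · have hwv := dist_add_dist_eq_of_mem_support hq hmq
    grind [SimpleGraph.dist_comm]

lemma exists_forall_dist_le_diam_add_one_div_two [Finite V] (hT : G.IsTree) :
    ∃ r, ∀ z, G.dist r z ≤ (G.diam + 1) / 2 := by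
  have := hT.connected.nonempty
  obtain ⟨x, y, hxy⟩ := G.exists_dist_eq_diam
  obtain ⟨p, hp⟩ := hT.connected.exists_walk_length_eq_dist x y
  have hle (a b : V) : G.dist a b ≤ G.diam :=
    dist_le_diam (connected_iff_ediam_ne_top.1 hT.connected)
  refine ⟨p.getVert (G.diam / 2), fun z ↦ ?_⟩
  have hx := dist_getVert_getVert hp (i := 0) (j := G.diam / 2) (by omega) (by omega)
  have hy := dist_getVert_getVert hp (i := p.length) (j := G.diam / 2) (by omega) (by omega)
  rw [Walk.getVert_zero] at hx
  rw [Walk.getVert_length] at hy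
  have h4 := four_point_condition hT x y z (p.getVert (G.diam / 2))
  have hxz := hle x z
  have hyz := hle y z
  rw [SimpleGraph.dist_comm (u := z)] at h4
  omega

end Tree

section Ultrametric

/-- A matching in the relation `r` on `X`, encoded as a finite set of ordered pairs of points of
`X`. Pairs of the form `(x, x)` are allowed, provided that `r x x` holds. It serves to select
disjoint pairs at a prescribed distance. -/
structure IsMatchingOn (r : V → V → Prop) (X : Finset V) (M : Finset (V × V)) : Prop where
  mem : ∀ p ∈ M, p.1 ∈ X ∧ p.2 ∈ X
  rel : ∀ p ∈ M, r p.1 p.2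
  pairwiseDisjoint : (M : Set (V × V)).PairwiseDisjoint fun p ↦ ({p.1, p.2} : Set V)

lemma exists_isMatchingOn_and_card_le (r : V → V → Prop) (X : Finset V) :
    ∃ M, IsMatchingOn r X M ∧ ∃ Y ⊆ X, #X ≤ #Y + 2 * #M ∧ ∀ x ∈ Y, ∀ y ∈ Y, ¬ r x y := by
  classical
  let matchings := {M ∈ (X ×ˢ X).powerset | IsMatchingOn r X M}
  have mem_matchings {M} : M ∈ matchings ↔ IsMatchingOn r X M := by
    simp only [matchings, mem_filter, mem_powerset, and_iff_right_iff_imp]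
    exact fun h p hp ↦ mem_product.2 (h.mem p hp)
  obtain ⟨M, hM, hmax⟩ := matchings.exists_max_image card
    ⟨∅, mem_matchings.2 ⟨by simp, by simp, by simp⟩⟩
  rw [mem_matchings] at hM
  let covered := M.biUnion fun p ↦ {p.1, p.2}
  have hcard : #covered ≤ #M * 2 := card_biUnion_le_card_mul _ _ _ fun p _ ↦ card_le_two
  refine ⟨M, hM, X \ covered, sdiff_subset, ?_, fun x hx y hy hxy ↦ ?_⟩
  · have := le_card_sdiff covered X
    omega
  · simp only [covered, mem_sdiff, mem_biUnion, mem_insert, mem_singleton] at hx hy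
    have hnotMem : (x, y) ∉ M := fun h ↦ hx.2 ⟨_, h, .inl rfl⟩
    have hinsert : IsMatchingOn r X (insert (x, y) M) := by
      refine ⟨?_, ?_, ?_⟩
      · simpa [hx.1, hy.1] using hM.mem
      · simpa [hxy] using hM.rel
      · rw [coe_insert]
        refine hM.pairwiseDisjoint.insert fun p hp _ ↦ ?_
        grind
    have := hmax _ (mem_matchings.2 hinsert)
    rw [card_insert_of_notMem hnotMem] at this
    omega

/-- The graph distance satisfies the strong triangle inequality on `X`, as it does on the spheres
of a tree. Mathlib's `IsUltrametricDist` is about the distance on a whole type. -/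
def UltrametricOn (G : SimpleGraph V) (X : Finset V) : Prop :=
  ∀ x ∈ X, ∀ y ∈ X, ∀ z ∈ X, G.dist x z ≤ max (G.dist x y) (G.dist y z)

lemma UltrametricOn.mono {X Y : Finset V} (hX : UltrametricOn G X) (hYX : Y ⊆ X) :
    UltrametricOn G Y :=
  fun x hx y hy z hz ↦ hX x (hYX hx) y (hYX hy) z (hYX hz)

lemma UltrametricOn.dist_le_dist {X : Finset V} (hX : UltrametricOn G X) {a a' b b' : V}
    (ha : a ∈ X) (ha' : a' ∈ X) (hb : b ∈ X) (hb' : b' ∈ X)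
    (haa' : G.dist a a' ≤ G.dist a' b') (hbb' : G.dist b b' ≤ G.dist a' b') :
    G.dist a b ≤ G.dist a' b' := by
  have h₁ := hX a ha a' ha' b hb
  have h₂ := hX a' ha' b' hb' b hb
  rw [G.dist_comm (u := b')] at h₂
  omega

lemma UltrametricOn.card_le_homNumber_of_isMatchingOn [Finite V] {X : Finset V} {t : ℕ}
    {M : Finset (V × V)} (hX : UltrametricOn G X)
    (hmin : ∀ x ∈ X, ∀ y ∈ X, x ≠ y → t ≤ G.dist x y)
    (hM : IsMatchingOn (fun x y ↦ x ≠ y ∧ G.dist x y = t) X M) : #M ≤ homNumber G := by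
  have hne {p q : M} (hpq : p ≠ q) :
      p.1.1 ≠ q.1.1 ∧ p.1.1 ≠ q.1.2 ∧ p.1.2 ≠ q.1.1 ∧ p.1.2 ≠ q.1.2 := by
    have hdisj : Disjoint ({p.1.1, p.1.2} : Set V) {q.1.1, q.1.2} :=
      hM.pairwiseDisjoint p.2 q.2 (Subtype.coe_injective.ne hpq)
    simpa only [Set.disjoint_insert_left, Set.disjoint_singleton_left, Set.mem_insert_iff,
      Set.mem_singleton_iff, not_or, and_assoc] using hdisj
  let a : M ↪ V := ⟨fun p ↦ p.1.1, fun p q h ↦ by_contra fun hpq ↦ (hne hpq).1 h⟩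
  let b : M ↪ V := ⟨fun p ↦ p.1.2, fun p q h ↦ by_contra fun hpq ↦ (hne hpq).2.2.2 h⟩
  have hab (p q : M) : a p ≠ b q := by
    obtain rfl | hpq := eq_or_ne p q
    · exact (hM.rel p.1 p.2).1
    · exact (hne hpq).2.1
  have ha (p : M) : a p ∈ X := (hM.mem p.1 p.2).1
  have hb (p : M) : b p ∈ X := (hM.mem p.1 p.2).2
  have hdist (p : M) : G.dist (a p) (b p) = t := (hM.rel p.1 p.2).2
  have hdist' (p : M) : G.dist (b p) (a p) = t := G.dist_comm.trans (hdist p)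
  rw [← Fintype.card_coe]
  refine card_le_homNumber a b hab fun p q ↦ ?_
  obtain rfl | hpq := eq_or_ne p q
  · simp only [SimpleGraph.dist_self]
  · have hta := hmin _ (ha p) _ (ha q) (a.injective.ne hpq)
    have htb := hmin _ (hb p) _ (hb q) (b.injective.ne hpq)
    apply le_antisymm
    · exact hX.dist_le_dist (ha p) (hb p) (ha q) (hb q) (hdist p ▸ htb) (hdist q ▸ htb)
    · exact hX.dist_le_dist (hb p) (ha p) (hb q) (ha q) (hdist' p ▸ hta) (hdist' q ▸ hta)

lemma UltrametricOn.card_le [Finite V] (D : Finset ℕ) {X : Finset V} (hX : UltrametricOn G X)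
    (hD : ∀ x ∈ X, ∀ y ∈ X, x ≠ y → G.dist x y ∈ D) : #X ≤ 2 * homNumber G * #D + 1 := by
  induction D using Finset.induction_on_min generalizing X with
  | empty =>
    rw [card_empty, mul_zero, zero_add, card_le_one]
    simpa [not_imp_not] using hD
  | insert t D ht ih =>
    have hmin : ∀ x ∈ X, ∀ y ∈ X, x ≠ y → t ≤ G.dist x y := by
      intro x hx y hy hxy
      obtain h | h := mem_insert.1 (hD x hx y hy hxy)
      · exact h.ge
      · exact (ht _ h).le
    obtain ⟨M, hM, Y, hYX, hcard, hY⟩ :=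
      exists_isMatchingOn_and_card_le (fun x y ↦ x ≠ y ∧ G.dist x y = t) X
    have hMcard : #M ≤ homNumber G := hX.card_le_homNumber_of_isMatchingOn hmin hM
    have hYcard : #Y ≤ 2 * homNumber G * #D + 1 := by
      refine ih (hX.mono hYX) fun x hx y hy hxy ↦ ?_
      exact (mem_insert.1 (hD x (hYX hx) y (hYX hy) hxy)).resolve_left
        fun h ↦ hY x hx y hy ⟨hxy, h⟩
    rw [card_insert_of_notMem fun h ↦ (ht t h).false, mul_add]
    omega

end Ultrametric

section Sphere

lemma ultrametricOn_of_forall_dist_eq (hT : G.IsTree) {r : V} {e : ℕ} {X : Finset V}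
    (hX : ∀ x ∈ X, G.dist r x = e) : UltrametricOn G X := by
  intro x hx y hy z hz
  have h := four_point_condition hT x z y r
  simp only [G.dist_comm (v := r), hX x hx, hX y hy, hX z hz, G.dist_comm (u := z)] at h
  omega

lemma card_le_of_forall_dist_eq [Finite V] (hT : G.IsTree) {r : V} {e : ℕ} {X : Finset V}
    (hX : ∀ x ∈ X, G.dist r x = e) : #X ≤ 2 * homNumber G * e + 1 := by
  have hmem : ∀ x ∈ X, ∀ y ∈ X, x ≠ y → G.dist x y ∈ (Icc 1 e).image (2 * ·) := by
    intro x hx y hy hxy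
    obtain ⟨d, hd⟩ := even_dist_add_dist_add_dist hT.connected hT.isBipartite r x y
    have hpos := hT.connected.pos_dist_of_ne hxy
    have htri : G.dist x y ≤ G.dist x r + G.dist r y := hT.connected.dist_triangle
    rw [G.dist_comm (u := y), hX x hx, hX y hy] at hd
    rw [G.dist_comm (v := r), hX x hx, hX y hy] at htri
    exact mem_image.2 ⟨d - e, mem_Icc.2 (by omega), by omega⟩
  calc #X ≤ 2 * homNumber G * #((Icc 1 e).image (2 * ·)) + 1 :=
        (ultrametricOn_of_forall_dist_eq hT hX).card_le _ hmem
    _ ≤ 2 * homNumber G * e + 1 := by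
        gcongr
        exact card_image_le.trans (by simp)

end Sphere

lemma sum_range_two_mul_mul_add_one_le (h : ℕ) :
    ∑ e ∈ range (h + 1), (2 * h * e + 1) ≤ (h + 1) ^ 3 := by
  have hgauss : (∑ e ∈ range (h + 1), e) * 2 = (h + 1) * h := sum_range_id_mul_two (h + 1)
  rw [sum_add_distrib, ← mul_sum]
  simp only [sum_const, card_range, smul_eq_mul, mul_one]
  nlinarith

lemma card_le_homNumber_add_one_pow_three [Fintype V] (hT : G.IsTree) :
    Fintype.card V ≤ (homNumber G + 1) ^ 3 := by
  classical
  obtain ⟨r, hr⟩ := exists_forall_dist_le_diam_add_one_div_two hT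
  have hdist (x : V) : G.dist r x ∈ range (homNumber G + 1) :=
    mem_range_succ_iff.2 ((hr x).trans (diam_add_one_div_two_le_homNumber hT.connected))
  calc Fintype.card V = ∑ e ∈ range (homNumber G + 1), #{x | G.dist r x = e} :=
        card_eq_sum_card_fiberwise fun x _ ↦ hdist x
    _ ≤ ∑ e ∈ range (homNumber G + 1), (2 * homNumber G * e + 1) :=
        sum_le_sum fun e _ ↦ card_le_of_forall_dist_eq hT fun x hx ↦ (mem_filter.1 hx).2
    _ ≤ (homNumber G + 1) ^ 3 := sum_range_two_mul_mul_add_one_le _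

end

/-- For every tree `T` on `n ≥ 1` vertices, `h(T) ≥ n^(1/3) − 1`. -/
theorem stmt5 {V : Type*} [Fintype V] (G : SimpleGraph V) (hT : G.IsTree)
    (n : ℕ) (hn : Fintype.card V = n) (h1 : 1 ≤ n) :
    (n : ℝ) ^ ((1 : ℝ) / 3) - 1 ≤ homNumber G := by
  rw [sub_le_iff_le_add, one_div, Real.rpow_inv_le_iff_of_pos (by positivity) (by positivity)
    (by norm_num), ← hn]
  exact_mod_cast card_le_homNumber_add_one_pow_three hT
end
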